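/- arXiv:0805.3437 — 2 statements merged into one kernel-verified Lean document; each statement's English description precedes it below -/
import Mathlib

section
/- Let M be a finite-dimensional (α,β)-Yetter-Drinfeld module and N a finite-dimensional (γ,δ)-Yetter-Drinfeld module. Then End(M) # End(N) ≅ End(^M N) # End(M) as algebras in _H𝒴𝒟^H, where ^M N := ^{(α,β)}N. -/
open TensorProduct

noncomputable section

namespace GYD

variable (k H : Type) [Field k] [Ring H] [HopfAlgebra k H]

/-- `φ` is a Hopf algebra automorphism of `H` (a linear equivalence which is both an
algebra morphism and a coalgebra morphism). -/
def IsHopfAut (φ : H ≃ₗ[k] H) : Prop :=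
  (∀ x y : H, φ (x * y) = φ x * φ y) ∧ (φ 1 = 1) ∧
  (∀ h : H, Coalgebra.comul (R := k) (φ h)
      = TensorProduct.map φ.toLinearMap φ.toLinearMap (Coalgebra.comul (R := k) h)) ∧
  (∀ h : H, Coalgebra.counit (R := k) (φ h) = Coalgebra.counit (R := k) h)

/-- `Sinv` is a two-sided inverse of the antipode of `H`. -/
def IsAntipodeInv (Sinv : H → H) : Prop :=
  (∀ h : H, HopfAlgebra.antipode (R := k) (Sinv h) = h) ∧
  (∀ h : H, Sinv (HopfAlgebra.antipode (R := k) h) = h)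

/-- The data `(act, coact)` makes `M` an `(α, β)`-Yetter-Drinfeld module over `H`:
`M` is a left `H`-module, a right `H`-comodule, and the compatibility
`(h·m)₍₀₎ ⊗ (h·m)₍₁₎ = h₂·m₍₀₎ ⊗ β(h₃) m₍₁₎ α(Sinv(h₁))` holds (expressed via
arbitrary finite representations of `(Δ ⊗ id)(Δ h)` and of `coact m`). -/
def IsYD (Sinv α β : H → H) {M : Type} [AddCommGroup M] [Module k M]
    (act : H →ₗ[k] M →ₗ[k] M) (coact : M →ₗ[k] M ⊗[k] H) : Prop :=
  (∀ m : M, act 1 m = m) ∧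
  (∀ (g h : H) (m : M), act (g * h) m = act g (act h m)) ∧
  (∀ m : M, LinearMap.rTensor H coact (coact m)
      = (TensorProduct.assoc k M H H).symm
          (LinearMap.lTensor M (Coalgebra.comul (R := k)) (coact m))) ∧
  (∀ m : M,
    TensorProduct.rid k M (LinearMap.lTensor M (Coalgebra.counit (R := k)) (coact m)) = m) ∧
  (∀ (h : H) (m : M) (s t : Finset ℕ) (a b c : ℕ → H) (m₀ : ℕ → M) (m₁ : ℕ → H),
    LinearMap.rTensor H (Coalgebra.comul (R := k)) (Coalgebra.comul (R := k) h)
        = ∑ i ∈ s, (a i ⊗ₜ[k] b i) ⊗ₜ[k] c i →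
    coact m = ∑ j ∈ t, m₀ j ⊗ₜ[k] m₁ j →
    coact (act h m) = ∑ i ∈ s, ∑ j ∈ t,
      act (b i) (m₀ j) ⊗ₜ[k] (β (c i) * m₁ j * α (Sinv (a i))))

/-- Characterization of the action `h · (m ⊗ n) = θ₁(h₁)·m ⊗ θ₂(h₂)·n` on `M ⊗ N`. -/
def TensorActChar (θ₁ θ₂ : H → H) {M N : Type} [AddCommGroup M] [Module k M]
    [AddCommGroup N] [Module k N]
    (actM : H →ₗ[k] M →ₗ[k] M) (actN : H →ₗ[k] N →ₗ[k] N)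
    (act : H →ₗ[k] (M ⊗[k] N) →ₗ[k] (M ⊗[k] N)) : Prop :=
  ∀ (h : H) (m : M) (n : N) (s : Finset ℕ) (p q : ℕ → H),
    Coalgebra.comul (R := k) h = ∑ i ∈ s, p i ⊗ₜ[k] q i →
    act h (m ⊗ₜ[k] n) = ∑ i ∈ s, actM (θ₁ (p i)) m ⊗ₜ[k] actN (θ₂ (q i)) n

/-- Characterization of the "type two" action `h · (m ⊗ n) = h₂·m ⊗ h₁·n` on `M ⊗ N`. -/
def TensorActCharTwo {M N : Type} [AddCommGroup M] [Module k M]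
    [AddCommGroup N] [Module k N]
    (actM : H →ₗ[k] M →ₗ[k] M) (actN : H →ₗ[k] N →ₗ[k] N)
    (act : H →ₗ[k] (M ⊗[k] N) →ₗ[k] (M ⊗[k] N)) : Prop :=
  ∀ (h : H) (m : M) (n : N) (s : Finset ℕ) (p q : ℕ → H),
    Coalgebra.comul (R := k) h = ∑ i ∈ s, p i ⊗ₜ[k] q i →
    act h (m ⊗ₜ[k] n) = ∑ i ∈ s, actM (q i) m ⊗ₜ[k] actN (p i) n

/-- Characterization of the coaction `m ⊗ n ↦ (m₍₀₎ ⊗ n₍₀₎) ⊗ n₍₁₎ m₍₁₎` on `M ⊗ N`. -/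
def TensorCoactChar {M N : Type} [AddCommGroup M] [Module k M]
    [AddCommGroup N] [Module k N]
    (coactM : M →ₗ[k] M ⊗[k] H) (coactN : N →ₗ[k] N ⊗[k] H)
    (coact : M ⊗[k] N →ₗ[k] (M ⊗[k] N) ⊗[k] H) : Prop :=
  ∀ (m : M) (n : N) (s t : Finset ℕ) (m₀ : ℕ → M) (m₁ : ℕ → H) (n₀ : ℕ → N) (n₁ : ℕ → H),
    coactM m = ∑ i ∈ s, m₀ i ⊗ₜ[k] m₁ i →
    coactN n = ∑ j ∈ t, n₀ j ⊗ₜ[k] n₁ j →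
    coact (m ⊗ₜ[k] n) = ∑ i ∈ s, ∑ j ∈ t, (m₀ i ⊗ₜ[k] n₀ j) ⊗ₜ[k] (n₁ j * m₁ i)

/-- Characterization of the "type two" coaction `m ⊗ n ↦ (m₍₀₎ ⊗ n₍₀₎) ⊗ m₍₁₎ n₍₁₎`. -/
def TensorCoactCharTwo {M N : Type} [AddCommGroup M] [Module k M]
    [AddCommGroup N] [Module k N]
    (coactM : M →ₗ[k] M ⊗[k] H) (coactN : N →ₗ[k] N ⊗[k] H)
    (coact : M ⊗[k] N →ₗ[k] (M ⊗[k] N) ⊗[k] H) : Prop :=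
  ∀ (m : M) (n : N) (s t : Finset ℕ) (m₀ : ℕ → M) (m₁ : ℕ → H) (n₀ : ℕ → N) (n₁ : ℕ → H),
    coactM m = ∑ i ∈ s, m₀ i ⊗ₜ[k] m₁ i →
    coactN n = ∑ j ∈ t, n₀ j ⊗ₜ[k] n₁ j →
    coact (m ⊗ₜ[k] n) = ∑ i ∈ s, ∑ j ∈ t, (m₀ i ⊗ₜ[k] n₀ j) ⊗ₜ[k] (m₁ i * n₁ j)

/-- Characterization of the action `(h · f)(m) = f (θ(h) · m)` on the dual space. -/
def DualActChar (θ : H → H) {M : Type} [AddCommGroup M] [Module k M]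
    (actM : H →ₗ[k] M →ₗ[k] M)
    (actD : H →ₗ[k] Module.Dual k M →ₗ[k] Module.Dual k M) : Prop :=
  ∀ (h : H) (f : Module.Dual k M) (m : M), actD h f m = f (actM (θ h) m)

/-- Characterization of the coaction `f₍₀₎(m) ⊗ f₍₁₎ = f(m₍₀₎) ⊗ σ(m₍₁₎)` on the dual space
(expressed through contraction against evaluation at each `m`). -/
def DualCoactChar (σ : H → H) {M : Type} [AddCommGroup M] [Module k M]
    (coactM : M →ₗ[k] M ⊗[k] H)
    (coactD : Module.Dual k M →ₗ[k] Module.Dual k M ⊗[k] H) : Prop :=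
  ∀ (f : Module.Dual k M) (m : M) (t : Finset ℕ) (m₀ : ℕ → M) (m₁ : ℕ → H),
    coactM m = ∑ j ∈ t, m₀ j ⊗ₜ[k] m₁ j →
    TensorProduct.lid k H (LinearMap.rTensor H (Module.Dual.eval k M m) (coactD f))
      = ∑ j ∈ t, f (m₀ j) • σ (m₁ j)

/-- Characterization of the action `(h · u)(m) = θ(h₁) · u (θ(S(h₂)) · m)` on `End(M)`. -/
def EndActChar (θ : H → H) {M : Type} [AddCommGroup M] [Module k M]
    (actM : H →ₗ[k] M →ₗ[k] M)
    (actE : H →ₗ[k] Module.End k M →ₗ[k] Module.End k M) : Prop :=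
  ∀ (h : H) (u : Module.End k M) (m : M) (s : Finset ℕ) (p q : ℕ → H),
    Coalgebra.comul (R := k) h = ∑ i ∈ s, p i ⊗ₜ[k] q i →
    actE h u m = ∑ i ∈ s,
      actM (θ (p i)) (u (actM (θ (HopfAlgebra.antipode (R := k) (q i))) m))

/-- Characterization of the coaction `u₍₀₎(m) ⊗ u₍₁₎ = u(m₍₀₎)₍₀₎ ⊗ Sinv(m₍₁₎) u(m₍₀₎)₍₁₎`
on `End(M)`, expressed through contraction against evaluation at each `m`. -/
def EndCoactChar (Sinv : H → H) {M : Type} [AddCommGroup M] [Module k M]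
    (coactM : M →ₗ[k] M ⊗[k] H)
    (coactE : Module.End k M →ₗ[k] Module.End k M ⊗[k] H) : Prop :=
  ∀ (u : Module.End k M) (m : M) (t : Finset ℕ) (m₀ : ℕ → M) (m₁ : ℕ → H)
    (r : ℕ → Finset ℕ) (n₀ : ℕ → ℕ → M) (n₁ : ℕ → ℕ → H),
    coactM m = ∑ j ∈ t, m₀ j ⊗ₜ[k] m₁ j →
    (∀ j ∈ t, coactM (u (m₀ j)) = ∑ l ∈ r j, n₀ j l ⊗ₜ[k] n₁ j l) →
    LinearMap.rTensor H (LinearMap.applyₗ (R := k) m) (coactE u)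
      = ∑ j ∈ t, ∑ l ∈ r j, n₀ j l ⊗ₜ[k] (Sinv (m₁ j) * n₁ j l)

/-- Characterization of the action `(h · u)(m) = θ(h₂) · u (θ(Sinv(h₁)) · m)` on `End(M)ᵒᵖ`. -/
def EndOpActChar (θ Sinv : H → H) {M : Type} [AddCommGroup M] [Module k M]
    (actM : H →ₗ[k] M →ₗ[k] M)
    (actE : H →ₗ[k] (Module.End k M)ᵐᵒᵖ →ₗ[k] (Module.End k M)ᵐᵒᵖ) : Prop :=
  ∀ (h : H) (u : (Module.End k M)ᵐᵒᵖ) (m : M) (s : Finset ℕ) (p q : ℕ → H),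
    Coalgebra.comul (R := k) h = ∑ i ∈ s, p i ⊗ₜ[k] q i →
    (actE h u).unop m = ∑ i ∈ s,
      actM (θ (q i)) (u.unop (actM (θ (Sinv (p i))) m))

/-- Characterization of the coaction `u₍₀₎(m) ⊗ u₍₁₎ = u(m₍₀₎)₍₀₎ ⊗ u(m₍₀₎)₍₁₎ S(m₍₁₎)`
on `End(M)ᵒᵖ`, expressed through contraction against evaluation at each `m`. -/
def EndOpCoactChar {M : Type} [AddCommGroup M] [Module k M]
    (coactM : M →ₗ[k] M ⊗[k] H)
    (coactE : (Module.End k M)ᵐᵒᵖ →ₗ[k] (Module.End k M)ᵐᵒᵖ ⊗[k] H) : Prop :=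
  ∀ (u : (Module.End k M)ᵐᵒᵖ) (m : M) (t : Finset ℕ) (m₀ : ℕ → M) (m₁ : ℕ → H)
    (r : ℕ → Finset ℕ) (n₀ : ℕ → ℕ → M) (n₁ : ℕ → ℕ → H),
    coactM m = ∑ j ∈ t, m₀ j ⊗ₜ[k] m₁ j →
    (∀ j ∈ t, coactM (u.unop (m₀ j)) = ∑ l ∈ r j, n₀ j l ⊗ₜ[k] n₁ j l) →
    LinearMap.rTensor H ((LinearMap.applyₗ (R := k) m).comp
        (MulOpposite.opLinearEquiv k).symm.toLinearMap) (coactE u)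
      = ∑ j ∈ t, ∑ l ∈ r j,
          n₀ j l ⊗ₜ[k] (n₁ j l * HopfAlgebra.antipode (R := k) (m₁ j))

/-- `A`, with the Yetter-Drinfeld structure `(act, coact)`, is an algebra in the braided
category of Yetter-Drinfeld modules over `H`. -/
def IsYDAlgebra (Sinv : H → H) {A : Type} [Ring A] [Algebra k A]
    (act : H →ₗ[k] A →ₗ[k] A) (coact : A →ₗ[k] A ⊗[k] H) : Prop :=
  IsYD k H Sinv id id act coact ∧
  (∀ (h : H) (a b : A) (s : Finset ℕ) (p q : ℕ → H),
    Coalgebra.comul (R := k) h = ∑ i ∈ s, p i ⊗ₜ[k] q i →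
    act h (a * b) = ∑ i ∈ s, act (p i) a * act (q i) b) ∧
  (∀ h : H, act h 1 = Coalgebra.counit (R := k) h • (1 : A)) ∧
  (coact 1 = (1 : A) ⊗ₜ[k] (1 : H)) ∧
  (∀ (a b : A) (s t : Finset ℕ) (a₀ : ℕ → A) (a₁ : ℕ → H) (b₀ : ℕ → A) (b₁ : ℕ → H),
    coact a = ∑ i ∈ s, a₀ i ⊗ₜ[k] a₁ i →
    coact b = ∑ j ∈ t, b₀ j ⊗ₜ[k] b₁ j →
    coact (a * b) = ∑ i ∈ s, ∑ j ∈ t, (a₀ i * b₀ j) ⊗ₜ[k] (b₁ j * a₁ i))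

/-- Characterization of the smash product multiplication
`(a # b)(a' # b') = a a'₍₀₎ # (a'₍₁₎ · b) b'` on `A ⊗ B`. -/
def SmashMulChar {A B : Type} [Ring A] [Algebra k A] [Ring B] [Algebra k B]
    (actB : H →ₗ[k] B →ₗ[k] B) (coactA : A →ₗ[k] A ⊗[k] H)
    (mul : (A ⊗[k] B) →ₗ[k] (A ⊗[k] B) →ₗ[k] (A ⊗[k] B)) : Prop :=
  ∀ (a a' : A) (b b' : B) (t : Finset ℕ) (a₀ : ℕ → A) (a₁ : ℕ → H),
    coactA a' = ∑ j ∈ t, a₀ j ⊗ₜ[k] a₁ j →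
    mul (a ⊗ₜ[k] b) (a' ⊗ₜ[k] b') = ∑ j ∈ t, (a * a₀ j) ⊗ₜ[k] (actB (a₁ j) b * b')

end GYD

/-!
Let `E = End M` with `C ∈ E ⊗ H` encoding the coaction of `M` and `r = (action of M) ∘ α⁻¹`.
Then the action of `H` on `E` is conjugation by `r` in the convolution algebra `Hom(H, E)`, the
coaction is conjugation by `C` in `E ⊗ Hᵐᵒᵖ`, and the Yetter–Drinfeld condition on `M` is an
identity between `C`, `r` and `σ = βα⁻¹` in `Hom(H, E ⊗ Hᵐᵒᵖ)`. Let `D`, `s` be the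
corresponding data on `F = End N`.

The element `R = (id ⊗ s)(C)` is invertible, and `u ⊗ v ↦ (u ⊗ 1) R (1 ⊗ v) R⁻¹` is an algebra
isomorphism from `E # F` to the ordinary tensor product `E ⊗ F`. It turns the action and the
coaction into conjugation by `h ↦ r(h₁) ⊗ s(σ(h₂))` and by `C₁₃ D₂₃`. In the same way
`End(^M N) # End(M)` becomes `F ⊗ E`. The flip `E ⊗ F → F ⊗ E` followed by conjugation by
`(id ⊗ r)(D')`, where `D'` encodes the coaction of `^M N`, exchanges the two pairs of conjugating
elements: for the actions this is the Yetter–Drinfeld condition on `N`, for the coactions the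
Yang–Baxter equation.
-/

namespace EndSmash

open WithConv Coalgebra MulOpposite Algebra.TensorProduct

/-! ### Convolution algebras -/

section Convolution

variable {k B B' : Type*} [CommSemiring k] [Semiring B] [Algebra k B] [Semiring B'] [Algebra k B']

section Coalgebra

variable {H H' : Type*} [AddCommMonoid H] [Module k H] [Coalgebra k H] [AddCommMonoid H']
  [Module k H'] [Coalgebra k H']

lemma smulRight_counit_convMul_apply (b : B) (f : WithConv (H →ₗ[k] B)) (h : H) :
    (toConv ((counit : H →ₗ[k] k).smulRight b) * f) h = b * f h := by
  rw [(ℛ k h).convMul_apply]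
  simp only [LinearMap.smulRight_apply, smul_mul_assoc, ← mul_smul_comm, ← map_smul,
    ← Finset.mul_sum, ← map_sum, sum_counit_smul]

/-- The embedding `b ↦ ε(·)b` of an algebra into its convolution algebra. -/
def convConst : B →+* WithConv (H →ₗ[k] B) where
  toFun b := toConv ((counit : H →ₗ[k] k).smulRight b)
  map_one' := by
    ext h
    simp [Algebra.algebraMap_eq_smul_one]
  map_mul' b b' := by
    ext h
    exact ((smulRight_counit_convMul_apply b _ h).trans (mul_smul_comm _ _ _)).symm
  map_zero' := by ext; simp
  map_add' b b' := by ext; simp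

lemma convConst_mul_apply (b : B) (f : WithConv (H →ₗ[k] B)) (h : H) :
    (convConst b * f : WithConv (H →ₗ[k] B)) h = b * f h :=
  smulRight_counit_convMul_apply b f h

lemma mul_convConst_apply (f : WithConv (H →ₗ[k] B)) (b : B) (h : H) :
    (f * convConst b : WithConv (H →ₗ[k] B)) h = f h * b := by
  have hsum : ∑ i ∈ (ℛ k h).index, counit (R := k) ((ℛ k h).right i) • (ℛ k h).left i = h := by
    simpa only [map_sum, TensorProduct.rid_tmul, one_smul] using
      congrArg (TensorProduct.rid k H) (sum_tmul_counit_eq (ℛ k h))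
  have hb (x : H) : (convConst b : WithConv (H →ₗ[k] B)) x = counit (R := k) x • b := rfl
  rw [(ℛ k h).convMul_apply]
  simp only [hb, mul_smul_comm, ← smul_mul_assoc, ← map_smul, ← Finset.sum_mul, ← map_sum, hsum]

lemma commute_convConst {f : WithConv (H →ₗ[k] B)} {b : B} (h : ∀ x, Commute (f x) b) :
    Commute f (convConst b) := by
  ext x
  exact (mul_convConst_apply f b x).trans ((h x).eq.trans (convConst_mul_apply b f x).symm)

/-- Postcomposition with an algebra morphism, as a morphism of convolution algebras. -/
def convMap (g : B →ₐ[k] B') : WithConv (H →ₗ[k] B) →+* WithConv (H →ₗ[k] B') where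
  toFun f := toConv (g.toLinearMap ∘ₗ f.ofConv)
  map_one' := by ext; simp
  map_mul' f f' := ofConv_injective (LinearMap.algHom_comp_convMul_distrib g f f')
  map_zero' := by ext; simp
  map_add' f f' := by ext; simp

/-- Precomposition with a coalgebra morphism, as a morphism of convolution algebras. -/
def convComap (b : H' →ₗc[k] H) : WithConv (H →ₗ[k] B) →+* WithConv (H' →ₗ[k] B) where
  toFun f := toConv (f.ofConv ∘ₗ b.toLinearMap)
  map_one' := by ext; simp
  map_mul' f f' := ofConv_injective (LinearMap.convMul_comp_coalgHom_distrib f f' b)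
  map_zero' := by ext; simp
  map_add' f f' := by ext; simp

@[simp]
lemma convMap_apply (g : B →ₐ[k] B') (f : WithConv (H →ₗ[k] B)) (h : H) :
    (convMap g f).ofConv h = g (f h) := rfl

@[simp]
lemma convMap_convConst (g : B →ₐ[k] B') (b : B) :
    convMap g (convConst b : WithConv (H →ₗ[k] B)) = convConst (g b) := by
  ext
  simp [convMap, convConst]

@[simp]
lemma convComap_convConst (f : H' →ₗc[k] H) (b : B) :
    convComap f (convConst b) = convConst b := by
  ext
  simp [convComap, convConst]

lemma convMul₃_apply (f f' f'' : WithConv (H →ₗ[k] B)) {x : H} {ι : Type*} {s : Finset ι}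
    {a b c : ι → H}
    (hx : LinearMap.rTensor H (comul (R := k)) (comul x) = ∑ i ∈ s, (a i ⊗ₜ[k] b i) ⊗ₜ[k] c i) :
    (f * f' * f'') x = ∑ i ∈ s, f (a i) * f' (b i) * f'' (c i) := by
  have h := congrArg (LinearMap.mul' k B ∘ₗ TensorProduct.map
    (LinearMap.mul' k B ∘ₗ TensorProduct.map f.ofConv f'.ofConv) f''.ofConv) hx
  rw [LinearMap.comp_apply, ← LinearMap.comp_apply (TensorProduct.map _ _),
    LinearMap.map_comp_rTensor] at h
  exact h.trans (by simp)

end Coalgebra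

variable {H : Type*} [Semiring H] [HopfAlgebra k H]

/-- An algebra morphism out of a Hopf algebra, as a unit of the convolution algebra. -/
def convUnit (s : H →ₐ[k] B) : (WithConv (H →ₗ[k] B))ˣ where
  val := toConv s.toLinearMap
  inv := toConv (s.toLinearMap ∘ₗ HopfAlgebra.antipode k)
  val_inv := by
    have := congrArg (convMap s) (LinearMap.id_mul_antipode (R := k) (C := H))
    rwa [map_mul, map_one] at this
  inv_val := by
    have := congrArg (convMap s) (LinearMap.antipode_mul_id (R := k) (C := H))
    rwa [map_mul, map_one] at this

end Convolution

/-! ### Corepresentations -/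

section Corep

variable {k H E : Type*} [CommSemiring k] [Semiring H] [Semiring E] [Algebra k E]

/-- `C ∈ E ⊗ H` is a corepresentation of `H` with values in the algebra `E`:
`(id ⊗ Δ)(C) = C₁₂ C₁₃` and `(id ⊗ ε)(C) = 1`. For `E = End M` this encodes a right comodule
structure `m ↦ C(m ⊗ 1)` on `M`. -/
structure IsCorep [Bialgebra k H] (C : E ⊗[k] H) : Prop where
  comul : LinearMap.lTensor E (Coalgebra.comul (R := k)) C =
    map (.id k E) includeLeft C * map (.id k E) includeRight C
  counit : LinearMap.lTensor E (Coalgebra.counit (R := k)) C = 1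

lemma lTensor_mul'_comp_map {A : Type*} [Semiring A] [Algebra k A] [Algebra k H]
    (f g : H →ₗ[k] A) (X Y : E ⊗[k] H) :
    LinearMap.lTensor E (LinearMap.mul' k A ∘ₗ TensorProduct.map f g)
      (map (.id k E) includeLeft X * map (.id k E) includeRight Y) =
      LinearMap.lTensor E f X * LinearMap.lTensor E g Y := by
  induction X with
  | zero => simp
  | add X X' hX hX' => simp only [map_add, add_mul, hX, hX']
  | tmul e x =>
    induction Y with
    | zero => simp
    | add Y Y' hY hY' => simp only [map_add, mul_add, hY, hY']
    | tmul e' y => simp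

namespace IsCorep

variable {A A' : Type*} [Semiring A] [Algebra k A] [Semiring A'] [Algebra k A']

section Bialgebra

variable [Bialgebra k H] {C : E ⊗[k] H}

/-- Slicing a corepresentation by linear maps: `f ↦ (id ⊗ f)(C)`. The corepresentation identities
say exactly that this is multiplicative for the convolution product. -/
def slice (hC : IsCorep C) : WithConv (H →ₗ[k] A) →* E ⊗[k] A where
  toFun f := LinearMap.lTensor E f.ofConv C
  map_one' := by
    have := congrArg (LinearMap.lTensor E (Algebra.linearMap k A)) hC.counit
    rw [← LinearMap.lTensor_comp_apply] at this
    exact this.trans (by simp [one_def])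
  map_mul' f g := by
    have := lTensor_mul'_comp_map f.ofConv g.ofConv C C
    rwa [← hC.comul, ← LinearMap.lTensor_comp_apply] at this

lemma slice_convConst (hC : IsCorep C) (a : A) : hC.slice (convConst a) = 1 ⊗ₜ[k] a := by
  have := congrArg (LinearMap.lTensor E (LinearMap.toSpanSingleton k A a)) hC.counit
  rw [← LinearMap.lTensor_comp_apply] at this
  exact this.trans (by simp [one_def])

lemma slice_convMap (hC : IsCorep C) (g : A →ₐ[k] A') (f : WithConv (H →ₗ[k] A)) :
    hC.slice (convMap g f) = map (.id k E) g (hC.slice f) :=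
  LinearMap.lTensor_comp_apply _ _ _ _

lemma lTensor (hC : IsCorep C) (b : H →ₐc[k] H) :
    IsCorep (LinearMap.lTensor E b.toLinearMap C) where
  comul := by
    let Φ : E ⊗[k] (H ⊗[k] H) →ₐ[k] E ⊗[k] (H ⊗[k] H) := map (.id k E) (map (b : H →ₐ[k] H) b)
    have hleft (X : E ⊗[k] H) : Φ (map (.id k E) includeLeft X) =
        map (.id k E) includeLeft (LinearMap.lTensor E b.toLinearMap X) := by
      induction X using TensorProduct.induction_on <;> simp_all [Φ, BialgHom.toCoalgHom_apply]
    have hright (X : E ⊗[k] H) : Φ (map (.id k E) includeRight X) =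
        map (.id k E) includeRight (LinearMap.lTensor E b.toLinearMap X) := by
      induction X using TensorProduct.induction_on <;> simp_all [Φ, BialgHom.toCoalgHom_apply]
    rw [← LinearMap.lTensor_comp_apply, ← b.map_comp_comul, LinearMap.lTensor_comp_apply, hC.comul,
      ← hleft, ← hright, ← map_mul]
    rfl
  counit := by
    rw [← LinearMap.lTensor_comp_apply, b.counit_comp, hC.counit]

end Bialgebra
end IsCorep

end Corep

/-! ### Yetter–Drinfeld compatibility and the Yang–Baxter equation -/

section YetterDrinfeld

variable {k H E F : Type*} [CommSemiring k] [Semiring H] [Semiring E] [Algebra k E]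
  [Semiring F] [Algebra k F]

/-- `E ⊗ H` with the second factor regarded as `Hᵐᵒᵖ`. -/
def opT [Algebra k H] : E ⊗[k] H ≃ₗ[k] E ⊗[k] Hᵐᵒᵖ :=
  (opLinearEquiv k).lTensor E

@[simp]
lemma opT_tmul [Algebra k H] (e : E) (x : H) : opT (e ⊗ₜ[k] x) = e ⊗ₜ[k] op x := rfl

/-- The element `X₁₃` of `E ⊗ F ⊗ A` given by `X ∈ E ⊗ A`. -/
def leg13 {A : Type*} [Semiring A] [Algebra k A] : E ⊗[k] A →ₐ[k] (E ⊗[k] F) ⊗[k] A :=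
  map includeLeft (.id k A)

/-- The element `Y₂₃` of `E ⊗ F ⊗ A` given by `Y ∈ F ⊗ A`. -/
def leg23 {A : Type*} [Semiring A] [Algebra k A] : F ⊗[k] A →ₐ[k] (E ⊗[k] F) ⊗[k] A :=
  map includeRight (.id k A)

lemma lTensor_comp_unop_op_mul [Algebra k H] (s : H →ₐ[k] F) (x : H) (Z : E ⊗[k] Hᵐᵒᵖ) (e : E) :
    LinearMap.lTensor E (s.toLinearMap ∘ₗ (opLinearEquiv k).symm.toLinearMap)
        ((1 ⊗ₜ op x) * Z * (e ⊗ₜ 1)) =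
      LinearMap.lTensor E (s.toLinearMap ∘ₗ (opLinearEquiv k).symm.toLinearMap) Z *
        ((1 ⊗ₜ s x) * (e ⊗ₜ 1)) := by
  induction Z using TensorProduct.induction_on <;> simp_all [mul_add, add_mul]

lemma lTensor_comp_unop_mul_op [Algebra k H] (s : H →ₐ[k] F) (x : H) (Z : E ⊗[k] Hᵐᵒᵖ) (e : E) :
    LinearMap.lTensor E (s.toLinearMap ∘ₗ (opLinearEquiv k).symm.toLinearMap)
        ((e ⊗ₜ 1) * Z * (1 ⊗ₜ op x)) =
      ((e ⊗ₜ 1) * (1 ⊗ₜ s x)) *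
        LinearMap.lTensor E (s.toLinearMap ∘ₗ (opLinearEquiv k).symm.toLinearMap) Z := by
  induction Z using TensorProduct.induction_on <;> simp_all [mul_add, add_mul]

section Bialgebra

variable [Bialgebra k H]

/-- The linear map `x ↦ op x`, as an element of the convolution algebra. -/
def convOp : WithConv (H →ₗ[k] Hᵐᵒᵖ) := toConv (opLinearEquiv k).toLinearMap

/-- The compatibility of a representation `r` and a corepresentation `C` on `E`, twisted by `σ`:
`op ∗ Ĉ ∗ r = r ∗ Ĉ ∗ (op ∘ σ)` under convolution with values in `E ⊗ Hᵐᵒᵖ`, where `Ĉ` is `C` seen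
in `E ⊗ Hᵐᵒᵖ`. An `(α, β)`-Yetter–Drinfeld module with action `ρ` gives
such a triple with `r = ρ ∘ α⁻¹` and `σ = β ∘ α⁻¹`. -/
def IsYetterDrinfeld (C : E ⊗[k] H) (r : H →ₐ[k] E) (σ : H →ₗ[k] H) : Prop :=
  convMap includeRight convOp * convConst (opT C) * convMap includeLeft (toConv r.toLinearMap) =
    convMap includeLeft (toConv r.toLinearMap) * convConst (opT C) *
      convMap includeRight (toConv (convOp.ofConv ∘ₗ σ))

namespace IsYetterDrinfeld

variable {C : E ⊗[k] H} {r : H →ₐ[k] E} {σ : H →ₗ[k] H}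

/-- Applying an algebra morphism `s` to the `Hᵐᵒᵖ`-leg of the Yetter–Drinfeld condition. -/
lemma slice_mul (h : IsYetterDrinfeld C r σ) (hC : IsCorep C) (s : H →ₐ[k] F) :
    convConst (hC.slice (toConv s.toLinearMap)) *
        (convMap includeRight (toConv s.toLinearMap) *
          convMap includeLeft (toConv r.toLinearMap)) =
      convMap includeLeft (toConv r.toLinearMap) *
          convMap includeRight (toConv (s.toLinearMap ∘ₗ σ)) *
        convConst (hC.slice (toConv s.toLinearMap)) := by
  ext x
  have hR : LinearMap.lTensor E (s.toLinearMap ∘ₗ (opLinearEquiv k).symm.toLinearMap) (opT C) =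
      hC.slice (toConv s.toLinearMap) :=
    (LinearMap.lTensor_comp_apply _ _ _ _).symm
  have hx := congrArg (fun f ↦ LinearMap.lTensor E
    (s.toLinearMap ∘ₗ (opLinearEquiv k).symm.toLinearMap) (f.ofConv x)) h
  rw [convConst_mul_apply, mul_convConst_apply, ← hR]
  simp only [(ℛ k x).convMul_apply, mul_convConst_apply, map_sum, convMap_apply] at hx ⊢
  simp only [includeLeft_apply, includeRight_apply] at hx ⊢
  rw [Finset.mul_sum, Finset.sum_mul]
  convert hx using 2
  · exact (lTensor_comp_unop_op_mul ..).symm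
  · exact (lTensor_comp_unop_mul_op ..).symm

/-- Obtained by slicing the Yetter–Drinfeld condition for `D` along `C`. -/
lemma yangBaxter {D : F ⊗[k] H} {C : E ⊗[k] H} {s : H →ₐ[k] F} {σ : H →ₗ[k] H}
    (hD : IsYetterDrinfeld D s σ) (hC : IsCorep C) :
    leg13 (opT C) * leg23 (opT D) * hC.slice (toConv s.toLinearMap) ⊗ₜ[k] 1 =
      hC.slice (toConv s.toLinearMap) ⊗ₜ[k] 1 * leg23 (opT D) *
        leg13 (opT (LinearMap.lTensor E σ C)) := by
  have hop : hC.slice convOp = opT C := rfl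
  have hσ : hC.slice (toConv (convOp.ofConv ∘ₗ σ)) = opT (LinearMap.lTensor E σ C) :=
    LinearMap.lTensor_comp_apply ..
  have hassoc := congrArg (fun f ↦ (Algebra.TensorProduct.assoc k k k E F Hᵐᵒᵖ).symm
    (hC.slice f)) hD
  simp only [map_mul, hC.slice_convMap, hC.slice_convConst, hop, hσ] at hassoc
  have h13 (X : E ⊗[k] Hᵐᵒᵖ) : leg13 X =
      (Algebra.TensorProduct.assoc k k k E F Hᵐᵒᵖ).symm (map (.id k E) includeRight X) := by
    induction X using TensorProduct.induction_on <;> simp_all [leg13]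
  have h23 (Y : F ⊗[k] Hᵐᵒᵖ) : leg23 Y =
      (Algebra.TensorProduct.assoc k k k E F Hᵐᵒᵖ).symm (1 ⊗ₜ Y) := by
    induction Y using TensorProduct.induction_on <;> simp_all [leg23, tmul_add]
  have h12 (Z : E ⊗[k] F) : Z ⊗ₜ[k] (1 : Hᵐᵒᵖ) =
      (Algebra.TensorProduct.assoc k k k E F Hᵐᵒᵖ).symm (map (.id k E) includeLeft Z) := by
    induction Z using TensorProduct.induction_on <;> simp_all [add_tmul]
  simpa only [h13, h23, h12] using hassoc

lemma twist (h : IsYetterDrinfeld C r σ) (b b' : H →ₐc[k] H) (hb : Function.LeftInverse b' b) :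
    IsYetterDrinfeld (LinearMap.lTensor E b'.toLinearMap C) (r.comp (b : H →ₐ[k] H))
      (b'.toLinearMap ∘ₗ σ ∘ₗ b.toLinearMap) := by
  let Φ : E ⊗[k] Hᵐᵒᵖ →ₐ[k] E ⊗[k] Hᵐᵒᵖ := map (.id k E) (AlgHom.op (b' : H →ₐ[k] H))
  let Ψ (f : WithConv (H →ₗ[k] E ⊗[k] Hᵐᵒᵖ)) := convComap b.toCoalgHom (convMap Φ f)
  have hC (X : E ⊗[k] H) : Φ (opT X) = opT (LinearMap.lTensor E b'.toLinearMap X) := by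
    induction X using TensorProduct.induction_on <;> simp_all [Φ, BialgHom.toCoalgHom_apply]
  have hop : Ψ (convMap includeRight convOp) = convMap includeRight convOp := by
    ext x
    exact congrArg (fun y ↦ (1 : E) ⊗ₜ[k] op y) (hb x)
  have hr : Ψ (convMap includeLeft (toConv r.toLinearMap)) =
      convMap includeLeft (toConv (r.comp (b : H →ₐ[k] H)).toLinearMap) := by
    ext x
    simp [Ψ, Φ, convComap, BialgHom.toCoalgHom_apply]
  have hΨ := congrArg Ψ h
  simp only [Ψ, map_mul, convMap_convConst, convComap_convConst, hC] at hop hr hΨ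
  rw [hop, hr] at hΨ
  exact hΨ

end IsYetterDrinfeld
end Bialgebra
end YetterDrinfeld

/-! ### Adjoint actions and the inverse of the antipode -/

section Adjoint

variable {k H F : Type*} [CommSemiring k] [Semiring H] [HopfAlgebra k H] [Semiring F] [Algebra k F]

/-- The adjoint action `h · v = s(h₁) v s(S(h₂))` of `H` on `F` given by a representation `s` of `H`
in `F`. -/
def adj (s : H →ₐ[k] F) : H →ₐ[k] Module.End k F :=
  (AlgHom.mulLeftRight k F).comp
    ((map s (s.op.comp (HopfAlgebra.antipodeAlgHomOp k H))).comp (Bialgebra.comulAlgHom k H))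

lemma adj_apply_apply (s : H →ₐ[k] F) {h : H} {ι : Type*} (𝓡 : Coalgebra.Repr k h ι) (v : F) :
    adj s h v =
      ∑ i ∈ 𝓡.index, s (𝓡.left i) * v * s (HopfAlgebra.antipode k (𝓡.right i)) := by
  simp only [adj, AlgHom.comp_apply, Bialgebra.comulAlgHom_apply, ← 𝓡.eq, map_sum,
    LinearMap.sum_apply]
  exact Finset.sum_congr rfl fun i _ ↦ AlgHom.mulLeftRight_apply ..

lemma semiconjBy_adj (s : H →ₐ[k] F) (v : F) :
    SemiconjBy (toConv s.toLinearMap) (convConst v) (toConv ((adj s).toLinearMap.flip v)) := by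
  suffices h : toConv ((adj s).toLinearMap.flip v) =
      (convUnit s : WithConv (H →ₗ[k] F)) * convConst v * (convUnit s)⁻¹.val by
    rw [h]
    exact Units.mk_semiconjBy (convUnit s) (convConst v)
  ext h
  rw [(ℛ k h).convMul_apply]
  simp only [mul_convConst_apply]
  exact adj_apply_apply s (ℛ k h) v

end Adjoint

section OpUnit

variable {k H E : Type*} [CommSemiring k] [Semiring H] [HopfAlgebra k H] [Semiring E] [Algebra k E]

/-- The antipode as an algebra morphism `Hᵐᵒᵖ → H`. -/
def antipodeUnop : Hᵐᵒᵖ →ₐ[k] H := AlgHom.opComm (HopfAlgebra.antipodeAlgHomOp k H)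

lemma convMap_antipodeUnop_injective (S : H ≃ₗ[k] H) (hS : S.toLinearMap = HopfAlgebra.antipode k) :
    Function.Injective
      (convMap antipodeUnop : WithConv (H →ₗ[k] Hᵐᵒᵖ) →+* WithConv (H →ₗ[k] H)) := by
  intro f g hfg
  ext x
  have hx : HopfAlgebra.antipode k (f x).unop = HopfAlgebra.antipode k (g x).unop :=
    LinearMap.congr_fun (congrArg WithConv.ofConv hfg) x
  rw [← hS] at hx
  exact unop_injective (S.injective hx)

lemma convMap_antipodeUnop_convOp :
    convMap antipodeUnop convOp = toConv (HopfAlgebra.antipode k (A := H)) := rfl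

lemma convMap_antipodeUnop_op_comp_symm (S : H ≃ₗ[k] H)
    (hS : S.toLinearMap = HopfAlgebra.antipode k) :
    convMap antipodeUnop (toConv ((opLinearEquiv k).toLinearMap ∘ₗ S.symm.toLinearMap)) =
      toConv (.id : H →ₗ[k] H) := by
  ext x
  exact (LinearMap.congr_fun hS (S.symm x)).symm.trans (S.apply_symm_apply x)

/-- When the antipode `S` is bijective, `x ↦ op x` is convolution-invertible with inverse
`x ↦ op (S⁻¹ x)`. -/
def convOpUnit (S : H ≃ₗ[k] H) (hS : S.toLinearMap = HopfAlgebra.antipode k) :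
    (WithConv (H →ₗ[k] Hᵐᵒᵖ))ˣ where
  val := convOp
  inv := toConv ((opLinearEquiv k).toLinearMap ∘ₗ S.symm.toLinearMap)
  val_inv := convMap_antipodeUnop_injective S hS <| by
    rw [map_mul, map_one, convMap_antipodeUnop_convOp, convMap_antipodeUnop_op_comp_symm S hS,
      LinearMap.antipode_mul_id]
  inv_val := convMap_antipodeUnop_injective S hS <| by
    rw [map_mul, map_one, convMap_antipodeUnop_convOp, convMap_antipodeUnop_op_comp_symm S hS,
      LinearMap.id_mul_antipode]

lemma IsCorep.slice_inv_convOpUnit {C : E ⊗[k] H} (hC : IsCorep C) (S : H ≃ₗ[k] H)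
    (hS : S.toLinearMap = HopfAlgebra.antipode k) :
    hC.slice (convOpUnit S hS)⁻¹.val = opT (LinearMap.lTensor E S.symm.toLinearMap C) :=
  LinearMap.lTensor_comp_apply ..

lemma IsCorep.opT_lTensor_symm_mul_opT {C : E ⊗[k] H} (hC : IsCorep C) (S : H ≃ₗ[k] H)
    (hS : S.toLinearMap = HopfAlgebra.antipode k) :
    opT (LinearMap.lTensor E S.symm.toLinearMap C) * opT C = 1 := by
  have h := congrArg hC.slice (convOpUnit S hS).inv_mul
  rwa [map_mul, map_one, hC.slice_inv_convOpUnit] at h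

lemma IsCorep.isUnit_opT {C : E ⊗[k] H} (hC : IsCorep C) (S : H ≃ₗ[k] H)
    (hS : S.toLinearMap = HopfAlgebra.antipode k) : IsUnit (opT C) :=
  (convOpUnit S hS).isUnit.map hC.slice

end OpUnit

section Implemented

lemma semiconjBy_mul_of_exchange {G : Type*} [Monoid G] {p p' q q' u v a b : G} (R : Gˣ)
    (hpq : p * q' * R = R * q * p') (hp : SemiconjBy p u a) (hq : SemiconjBy q v b)
    (hu : Commute q' u) (hv : Commute p' v) :
    SemiconjBy (p * q') (u * (R * v * ↑R⁻¹)) (a * (R * b * ↑R⁻¹)) := by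
  have hinv : p * q' = R * (q * p') * ↑R⁻¹ := by rw [← mul_assoc, ← hpq, Units.mul_inv_cancel_right]
  have hR : SemiconjBy (p * q') (R * v * ↑R⁻¹) (R * b * ↑R⁻¹) := by
    rw [hinv, SemiconjBy]
    simp only [mul_assoc, Units.inv_mul_cancel_left]
    rw [← mul_assoc p', hv.eq, ← mul_assoc q, ← mul_assoc q, hq.eq]
    simp only [mul_assoc]
  exact (hp.mul_left hu).mul_right hR

variable {k H A B B' : Type*} [CommSemiring k] [Semiring H] [Bialgebra k H]
  [AddCommMonoid A] [Module k A] [Semiring B] [Algebra k B] [Semiring B'] [Algebra k B']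

/-- Under `φ : A → B`, the action of `H` on `A` becomes conjugation by `ρ` in `Hom(H, B)` and the
coaction becomes conjugation by `c` in `B ⊗ Hᵐᵒᵖ`. -/
structure IsImplementedBy (act : H →ₗ[k] A →ₗ[k] A) (coact : A →ₗ[k] A ⊗[k] H) (φ : A →ₗ[k] B)
    (ρ : WithConv (H →ₗ[k] B)) (c : B ⊗[k] Hᵐᵒᵖ) : Prop where
  act : ∀ a, SemiconjBy ρ (convConst (φ a)) (toConv (φ ∘ₗ act.flip a))
  coact : ∀ a, SemiconjBy c (φ a ⊗ₜ 1) (opT (LinearMap.rTensor H φ (coact a)))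

namespace IsImplementedBy

variable {act : H →ₗ[k] A →ₗ[k] A} {coact : A →ₗ[k] A ⊗[k] H} {φ : A →ₗ[k] B}
  {ρ : WithConv (H →ₗ[k] B)} {c : B ⊗[k] Hᵐᵒᵖ}

lemma map (h : IsImplementedBy act coact φ ρ c) (ψ : B →ₐ[k] B') :
    IsImplementedBy act coact (ψ.toLinearMap ∘ₗ φ) (convMap ψ ρ)
      (Algebra.TensorProduct.map ψ (.id k _) c) where
  act a := by
    have := (h.act a).map (convMap ψ)
    rwa [convMap_convConst] at this
  coact a := by
    have hψ (X : A ⊗[k] H) : Algebra.TensorProduct.map ψ (.id k _) (opT (LinearMap.rTensor H φ X)) =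
        opT (LinearMap.rTensor H (ψ.toLinearMap ∘ₗ φ) X) := by
      induction X using TensorProduct.induction_on <;> simp_all
    simpa [hψ] using (h.coact a).map (Algebra.TensorProduct.map ψ (.id k Hᵐᵒᵖ))

variable {A' : Type*} [AddCommMonoid A'] [Module k A'] {act' : H →ₗ[k] A' →ₗ[k] A'}
  {coact' : A' →ₗ[k] A' ⊗[k] H} {φ' : A' →ₗ[k] B}

lemma act_eq_act (h : IsImplementedBy act coact φ ρ c) (h' : IsImplementedBy act' coact' φ' ρ c)
    (hρ : IsUnit ρ) {a : A} {a' : A'} (ha : φ a = φ' a') (x : H) :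
    φ (act x a) = φ' (act' x a') := by
  have := (h.act a).eq.symm.trans ((ha ▸ (h'.act a').eq :))
  exact LinearMap.congr_fun (ofConv_injective.eq_iff.mpr (hρ.mul_right_cancel this)) x

lemma rTensor_coact_eq (h : IsImplementedBy act coact φ ρ c)
    (h' : IsImplementedBy act' coact' φ' ρ c) (hc : IsUnit c) {a : A} {a' : A'}
    (ha : φ a = φ' a') :
    LinearMap.rTensor H φ (coact a) = LinearMap.rTensor H φ' (coact' a') := by
  have := (h.coact a).eq.symm.trans ((ha ▸ (h'.coact a').eq :))
  exact opT.injective (hc.mul_right_cancel this)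

end IsImplementedBy
end Implemented

/-! ### Smash products as tensor products -/

section Smash

variable {k H E F : Type*} [CommSemiring k] [Semiring H] [HopfAlgebra k H] [Semiring E]
  [Algebra k E] [Semiring F] [Algebra k F]

/-- The anti-representation of `E ⊗ Hᵐᵒᵖ` on `E ⊗ F` in which `E` acts by right multiplication and
`Hᵐᵒᵖ` through the adjoint action `adj s` on `F`. -/
def smashRep (s : H →ₐ[k] F) : E ⊗[k] Hᵐᵒᵖ →ₐ[k] (Module.End k (E ⊗[k] F))ᵐᵒᵖ :=
  lift
    (AlgHom.opComm.symm ((Module.endTensorEndAlgHom.comp includeLeft).comp (Algebra.lsmul k k E)))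
    (AlgHom.op ((Module.endTensorEndAlgHom.comp includeRight).comp (adj s)))
    fun a y ↦ (commute_iff_eq _ _).mpr <| unop_injective <| by
      ext; simp [Module.endTensorEndAlgHom_apply]

lemma smashRep_tmul_apply (s : H →ₐ[k] F) (a : E) (y : Hᵐᵒᵖ) (e : E) (f : F) :
    (smashRep s (a ⊗ₜ y)).unop (e ⊗ₜ f) = (e * a) ⊗ₜ adj s y.unop f := by
  simp [smashRep, Module.endTensorEndAlgHom_apply]

lemma smashRep_opT_apply (s : H →ₐ[k] F) (X : E ⊗[k] H) (e : E) (f : F) :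
    (smashRep s (opT X)).unop (e ⊗ₜ f) =
      (e ⊗ₜ 1) * LinearMap.lTensor E ((adj s).toLinearMap.flip f) X := by
  induction X using TensorProduct.induction_on <;> simp_all [smashRep_tmul_apply, mul_add]

/-- The map `e ⊗ f ↦ (e ⊗ 1)(id ⊗ adj s(·)(f))(C)` from the smash product of `E` and `F` to the
tensor product algebra. If `C` is a corepresentation and `R = (id ⊗ s)(C)` then it is
`e ⊗ f ↦ (e ⊗ 1) R (1 ⊗ f) R⁻¹`. -/
def smashHom (C : E ⊗[k] H) (s : H →ₐ[k] F) : E ⊗[k] F →ₗ[k] E ⊗[k] F := (smashRep s (opT C)).unop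

variable {C : E ⊗[k] H} {s : H →ₐ[k] F}

lemma smashHom_smashRep (s : H →ₐ[k] F) {a : E} {X : E ⊗[k] H}
    (h : SemiconjBy (opT C) (a ⊗ₜ 1) (opT X)) (z : E ⊗[k] F) :
    smashHom C s ((smashRep s (opT X)).unop z) = smashHom C s z * (a ⊗ₜ 1) := by
  have hP := congrArg (fun Y ↦ (smashRep s Y).unop z) h.eq
  have ha (w : E ⊗[k] F) : (smashRep s (a ⊗ₜ 1)).unop w = w * (a ⊗ₜ 1) := by
    induction w using TensorProduct.induction_on <;> simp_all [smashRep_tmul_apply, add_mul]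
  simp only [map_mul, unop_mul, Module.End.mul_apply, ha] at hP
  exact hP.symm

lemma bijective_smashHom (hC : IsUnit (opT C)) : Function.Bijective (smashHom C s) :=
  (Module.End.isUnit_iff _).mp (isUnit_unop.mpr (hC.map (smashRep s)))

/-- `smashHom C s` as an equivalence. -/
def smashEquiv (hC : IsUnit (opT C)) (s : H →ₐ[k] F) : E ⊗[k] F ≃ₗ[k] E ⊗[k] F :=
  .ofBijective (smashHom C s) (bijective_smashHom hC)

/-- The invertible element `(id ⊗ s)(C)` of `E ⊗ F`. -/
def IsCorep.rMatrix (hC : IsCorep C) (s : H →ₐ[k] F) : (E ⊗[k] F)ˣ :=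
  Units.map hC.slice (convUnit s)

variable (hC : IsCorep C)

lemma smashHom_tmul (e : E) (f : F) :
    smashHom C s (e ⊗ₜ f) =
      (e ⊗ₜ 1) * ((hC.rMatrix s : E ⊗[k] F) * (1 ⊗ₜ f) * (hC.rMatrix s)⁻¹.val) := by
  have h := congrArg hC.slice (semiconjBy_adj s f).eq
  rw [map_mul, map_mul, hC.slice_convConst] at h
  rw [smashHom, smashRep_opT_apply]
  exact congrArg _ ((Units.eq_mul_inv_iff_mul_eq _).mpr h.symm)

include hC in
lemma smashHom_one : smashHom C s (1 ⊗ₜ 1) = 1 := by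
  rw [smashHom_tmul hC]
  simp [← one_def]

include hC in
lemma smashHom_mul_one_tmul (z : E ⊗[k] F) (f : F) :
    smashHom C s (z * (1 ⊗ₜ f)) = smashHom C s z * smashHom C s (1 ⊗ₜ f) := by
  induction z with
  | zero => simp
  | add z z' hz hz' => simp only [add_mul, map_add, hz, hz']
  | tmul e g =>
    have hgf : (1 : E) ⊗ₜ[k] (g * f) = (1 ⊗ₜ g) * (1 ⊗ₜ f) := by simp
    rw [tmul_mul_tmul, mul_one, smashHom_tmul hC, smashHom_tmul hC, smashHom_tmul hC, hgf]
    simp only [← one_def, one_mul, mul_assoc, Units.inv_mul_cancel_left]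

lemma smashHom_comp_convMul (U : WithConv (H →ₗ[k] E)) (V : WithConv (H →ₗ[k] F)) :
    toConv (smashHom C s ∘ₗ (convMap includeLeft U * convMap includeRight V).ofConv) =
      convMap includeLeft U * (convConst (hC.rMatrix s : E ⊗[k] F) * convMap includeRight V *
        convConst (hC.rMatrix s)⁻¹.val) := by
  ext x
  change smashHom C s ((convMap includeLeft U * convMap includeRight V).ofConv x) = _
  rw [(ℛ k x).convMul_apply, (ℛ k x).convMul_apply, map_sum]
  refine Finset.sum_congr rfl fun i _ ↦ ?_
  rw [mul_convConst_apply, convConst_mul_apply]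
  simp only [convMap_apply, includeLeft_apply, includeRight_apply, tmul_mul_tmul, mul_one, one_mul,
    smashHom_tmul hC]

lemma rTensor_smashHom (X : E ⊗[k] Hᵐᵒᵖ) (Y : F ⊗[k] Hᵐᵒᵖ) :
    LinearMap.rTensor Hᵐᵒᵖ (smashHom C s) (leg13 X * leg23 Y) =
      leg13 X * ((hC.rMatrix s : E ⊗[k] F) ⊗ₜ 1 * leg23 Y * (hC.rMatrix s)⁻¹.val ⊗ₜ 1) := by
  induction X with
  | zero => simp
  | add X X' hX hX' => simp only [map_add, add_mul, hX, hX']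
  | tmul e x =>
    induction Y with
    | zero => simp
    | add Y Y' hY hY' => simp only [map_add, mul_add, add_mul, hY, hY']
    | tmul f y => simp [leg13, leg23, smashHom_tmul hC]

end Smash

section Inner

variable {k H E F : Type*} [CommSemiring k] [Semiring H] [HopfAlgebra k H] [Semiring E]
  [Algebra k E] [Semiring F] [Algebra k F]

/-- The algebra `E` carries the adjoint action of `r` and the coaction by conjugation with `C`, for
compatible `(C, r, σ)`. This is the structure of `End M` for a Yetter–Drinfeld module `M`. -/
structure IsInner (C : E ⊗[k] H) (r : H →ₐ[k] E) (σ : H →ₐc[k] H) (act : H →ₗ[k] E →ₗ[k] E)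
    (coact : E →ₗ[k] E ⊗[k] H) : Prop where
  isCorep : IsCorep C
  isYetterDrinfeld : IsYetterDrinfeld C r σ.toLinearMap
  act_eq : act = (adj r).toLinearMap
  coact : ∀ a, SemiconjBy (opT C) (a ⊗ₜ 1) (opT (coact a))

lemma IsInner.act {C : E ⊗[k] H} {r : H →ₐ[k] E} {σ : H →ₐc[k] H} {act : H →ₗ[k] E →ₗ[k] E}
    {coact : E →ₗ[k] E ⊗[k] H} (h : IsInner C r σ act coact) (a : E) :
    SemiconjBy (toConv r.toLinearMap) (convConst a) (toConv (act.flip a)) :=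
  h.act_eq ▸ semiconjBy_adj r a

/-- The structure maps of the smash product of `E` and `F`:
`(a ⊗ b)(a' ⊗ b') = a a'₀ ⊗ (a'₁ · b) b'`, with action `h · (a ⊗ b) = h₁ · a ⊗ h₂ · b` and coaction
`a ⊗ b ↦ (a₀ ⊗ b₀) ⊗ b₁a₁`. -/
structure IsSmash (actE : H →ₗ[k] E →ₗ[k] E) (coactE : E →ₗ[k] E ⊗[k] H)
    (actF : H →ₗ[k] F →ₗ[k] F) (coactF : F →ₗ[k] F ⊗[k] H)
    (mul : E ⊗[k] F →ₗ[k] E ⊗[k] F →ₗ[k] E ⊗[k] F) (act : H →ₗ[k] E ⊗[k] F →ₗ[k] E ⊗[k] F)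
    (coact : E ⊗[k] F →ₗ[k] (E ⊗[k] F) ⊗[k] H) : Prop where
  mul_tmul_tmul (a a' : E) (b b' : F) : mul (a ⊗ₜ b) (a' ⊗ₜ b') =
    (a ⊗ₜ 1) * LinearMap.lTensor E (actF.flip b) (coactE a') * (1 ⊗ₜ b')
  flip_act_tmul (a : E) (b : F) : toConv (act.flip (a ⊗ₜ b)) =
    convMap includeLeft (toConv (actE.flip a)) * convMap includeRight (toConv (actF.flip b))
  opT_coact_tmul (a : E) (b : F) :
    opT (coact (a ⊗ₜ b)) = leg13 (opT (coactE a)) * leg23 (opT (coactF b))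

/-- The representation `h ↦ r(h₁) ⊗ s(σ(h₂))` of `H` in `E ⊗ F`. -/
def prodRep (r : H →ₐ[k] E) (σ : H →ₐc[k] H) (s : H →ₐ[k] F) : WithConv (H →ₗ[k] E ⊗[k] F) :=
  convMap includeLeft (toConv r.toLinearMap) *
    convMap includeRight (toConv (s.comp (σ : H →ₐ[k] H)).toLinearMap)

lemma isUnit_prodRep (r : H →ₐ[k] E) (σ : H →ₐc[k] H) (s : H →ₐ[k] F) :
    IsUnit (prodRep r σ s) :=
  ((convUnit r).isUnit.map (convMap _)).mul ((convUnit (s.comp (σ : H →ₐ[k] H))).isUnit.map _)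

lemma commute_leg13 {A : Type*} [Semiring A] [Algebra k A] (X : E ⊗[k] A) (b : F) :
    Commute (leg13 X) (((1 : E) ⊗ₜ[k] b) ⊗ₜ[k] (1 : A)) := by
  induction X using TensorProduct.induction_on <;>
    simp_all [leg13, commute_iff_eq, add_mul, mul_add]

lemma commute_leg23 {A : Type*} [Semiring A] [Algebra k A] (Y : F ⊗[k] A) (a : E) :
    Commute (leg23 Y) ((a ⊗ₜ[k] (1 : F)) ⊗ₜ[k] (1 : A)) := by
  induction Y using TensorProduct.induction_on <;>
    simp_all [leg23, commute_iff_eq, add_mul, mul_add]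

namespace IsSmash

variable {C : E ⊗[k] H} {r : H →ₐ[k] E} {σ : H →ₐc[k] H} {D : F ⊗[k] H} {s : H →ₐ[k] F}
  {τ : H →ₐc[k] H} {actE : H →ₗ[k] E →ₗ[k] E} {coactE : E →ₗ[k] E ⊗[k] H}
  {actF : H →ₗ[k] F →ₗ[k] F} {coactF : F →ₗ[k] F ⊗[k] H}
  {mul : E ⊗[k] F →ₗ[k] E ⊗[k] F →ₗ[k] E ⊗[k] F} {act : H →ₗ[k] E ⊗[k] F →ₗ[k] E ⊗[k] F}
  {coact : E ⊗[k] F →ₗ[k] (E ⊗[k] F) ⊗[k] H}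
  (h : IsSmash actE coactE actF coactF mul act coact)
  (hE : IsInner C r σ actE coactE) (hF : IsInner D s τ actF coactF)

include h hE hF

lemma smashHom_mul (x y : E ⊗[k] F) :
    smashHom C s (mul x y) = smashHom C s x * smashHom C s y := by
  induction x with
  | zero => simp
  | add x x' hx hx' => simp only [map_add, LinearMap.add_apply, add_mul, hx, hx']
  | tmul a b =>
    induction y with
    | zero => simp
    | add y y' hy hy' => simp only [map_add, mul_add, hy, hy']
    | tmul a' b' =>
      rw [h.mul_tmul_tmul, hF.act_eq, ← smashRep_opT_apply, smashHom_mul_one_tmul hE.isCorep,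
        smashHom_smashRep s (hE.coact a'), mul_assoc, smashHom_tmul hE.isCorep 1,
        smashHom_tmul hE.isCorep a', ← one_def, one_mul]

lemma semiconjBy_prodRep (a : E) (b : F) :
    SemiconjBy (prodRep r σ s) (convConst (smashHom C s (a ⊗ₜ b)))
      (toConv (smashHom C s ∘ₗ act.flip (a ⊗ₜ b))) := by
  have hp := (hE.act a).map (convMap (includeLeft : E →ₐ[k] E ⊗[k] F))
  have hq := (hF.act b).map (convMap (includeRight : F →ₐ[k] E ⊗[k] F))
  rw [convMap_convConst] at hp hq
  have hf (x : H) : Commute ((1 : E) ⊗ₜ[k] (s.comp (σ : H →ₐ[k] H)) x) (a ⊗ₜ 1) :=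
    (Commute.one_left _).tmul (.one_right _)
  have hf' (x : H) : Commute (r x ⊗ₜ[k] (1 : F)) (1 ⊗ₜ b) :=
    (Commute.one_right _).tmul (.one_left _)
  have hexch := (hE.isYetterDrinfeld.slice_mul hE.isCorep s).symm.trans (mul_assoc ..).symm
  have := semiconjBy_mul_of_exchange (Units.map convConst.toMonoidHom (hE.isCorep.rMatrix s))
    hexch hp hq (commute_convConst hf) (commute_convConst hf')
  have hact := smashHom_comp_convMul (s := s) hE.isCorep (toConv (actE.flip a))
    (toConv (actF.flip b))
  rw [← h.flip_act_tmul, WithConv.ofConv_toConv] at hact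
  rw [smashHom_tmul hE.isCorep, map_mul, map_mul, map_mul, hact]
  exact this

lemma semiconjBy_leg13_mul_leg23 (a : E) (b : F) :
    SemiconjBy (leg13 (opT C) * leg23 (opT D)) (smashHom C s (a ⊗ₜ b) ⊗ₜ 1)
      (opT (LinearMap.rTensor H (smashHom C s) (coact (a ⊗ₜ b)))) := by
  have hp := (hE.coact a).map (leg13 (F := F))
  have hq := (hF.coact b).map (leg23 (E := E))
  have := semiconjBy_mul_of_exchange
    (Units.map (includeLeft : _ →ₐ[k] (E ⊗[k] F) ⊗[k] Hᵐᵒᵖ) (hE.isCorep.rMatrix s))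
    (hF.isYetterDrinfeld.yangBaxter hE.isCorep) hp hq
    (commute_leg23 _ a) (commute_leg13 _ b)
  have hop (Z : (E ⊗[k] F) ⊗[k] H) : opT (LinearMap.rTensor H (smashHom C s) Z) =
      LinearMap.rTensor Hᵐᵒᵖ (smashHom C s) (opT Z) := by
    induction Z using TensorProduct.induction_on <;> simp_all
  rw [hop, h.opT_coact_tmul, rTensor_smashHom hE.isCorep, smashHom_tmul hE.isCorep]
  simpa [leg13, leg23] using this

lemma isImplementedBy_smashHom :
    IsImplementedBy act coact (smashHom C s) (prodRep r σ s) (leg13 (opT C) * leg23 (opT D)) where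
  act z := by
    induction z with
    | zero => simp
    | add z z' hz hz' => simpa [LinearMap.comp_add] using hz.add_right hz'
    | tmul a b => exact h.semiconjBy_prodRep hE hF a b
  coact z := by
    induction z with
    | zero => simp
    | add z z' hz hz' => simpa [add_tmul] using hz.add_right hz'
    | tmul a b => exact h.semiconjBy_leg13_mul_leg23 hE hF a b

end IsSmash
end Inner

/-! ### Exchanging the factors -/

section Exchange

variable {k H E F : Type*} [CommSemiring k] [Semiring H] [Semiring E] [Algebra k E] [Semiring F]
  [Algebra k F]

/-- The flip `E ⊗ F ≃ F ⊗ E` followed by conjugation by a unit `Q` of `F ⊗ E`. -/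
def flipConj (Q : (F ⊗[k] E)ˣ) : E ⊗[k] F ≃ₐ[k] F ⊗[k] E :=
  (Algebra.TensorProduct.comm k E F).trans
    (MulSemiringAction.toAlgEquiv k (F ⊗[k] E) (ConjAct.toConjAct Q))

lemma flipConj_apply (Q : (F ⊗[k] E)ˣ) (z : E ⊗[k] F) :
    flipConj Q z = Q * Algebra.TensorProduct.comm k E F z * Q⁻¹.val := rfl

lemma convMap_flipConj_mul [Bialgebra k H] (Q : (F ⊗[k] E)ˣ) (u : WithConv (H →ₗ[k] E))
    (v : WithConv (H →ₗ[k] F)) :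
    convMap (flipConj Q).toAlgHom (convMap includeLeft u * convMap includeRight v) *
        convConst Q.val =
      convConst Q.val * (convMap includeRight u * convMap includeLeft v) := by
  ext x
  rw [mul_convConst_apply, convConst_mul_apply]
  change flipConj Q ((convMap includeLeft u * convMap includeRight v).ofConv x) * Q = _
  rw [flipConj_apply, Units.inv_mul_cancel_right]
  simp [(ℛ k x).convMul_apply]

lemma map_flipConj_mul [Algebra k H] (Q : (F ⊗[k] E)ˣ) (X : E ⊗[k] Hᵐᵒᵖ) (Y : F ⊗[k] Hᵐᵒᵖ) :
    map (flipConj Q).toAlgHom (.id k Hᵐᵒᵖ) (leg13 X * leg23 Y) * Q.val ⊗ₜ[k] (1 : Hᵐᵒᵖ) =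
      Q.val ⊗ₜ[k] (1 : Hᵐᵒᵖ) * leg23 X * leg13 Y := by
  have hmap (Z : (E ⊗[k] F) ⊗[k] Hᵐᵒᵖ) :
      map (flipConj Q).toAlgHom (.id k Hᵐᵒᵖ) Z * Q.val ⊗ₜ[k] (1 : Hᵐᵒᵖ) =
        Q.val ⊗ₜ[k] (1 : Hᵐᵒᵖ) *
          map (Algebra.TensorProduct.comm k E F).toAlgHom (.id k Hᵐᵒᵖ) Z := by
    induction Z using TensorProduct.induction_on <;> simp_all [flipConj_apply, add_mul, mul_add]
  have h13 (X : E ⊗[k] Hᵐᵒᵖ) :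
      map (Algebra.TensorProduct.comm k E F).toAlgHom (.id k Hᵐᵒᵖ) (leg13 X) = leg23 X := by
    induction X using TensorProduct.induction_on <;> simp_all [leg13, leg23]
  have h23 (Y : F ⊗[k] Hᵐᵒᵖ) :
      map (Algebra.TensorProduct.comm k E F).toAlgHom (.id k Hᵐᵒᵖ) (leg23 Y) = leg13 Y := by
    induction Y using TensorProduct.induction_on <;> simp_all [leg13, leg23]
  rw [hmap, map_mul, h13, h23, mul_assoc]

variable [HopfAlgebra k H] {C : E ⊗[k] H} {r : H →ₐ[k] E} {D : F ⊗[k] H} {s : H →ₐ[k] F}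
  {τ : H →ₐc[k] H}

lemma convMap_flipConj_convMul (hC : IsCorep C) (h : IsYetterDrinfeld C r τ.toLinearMap) :
    convMap (flipConj (hC.rMatrix s)).toAlgHom
        (convMap includeLeft (toConv s.toLinearMap) * convMap includeRight (toConv r.toLinearMap)) =
      prodRep r τ s := by
  have hQ := (hC.rMatrix s).isUnit.map (convConst : _ →+* WithConv (H →ₗ[k] E ⊗[k] F))
  refine hQ.mul_right_cancel ?_
  exact (convMap_flipConj_mul ..).trans (h.slice_mul hC s)

lemma map_flipConj_leg13_mul_leg23 (hD : IsYetterDrinfeld D s τ.toLinearMap) (hC : IsCorep C) :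
    map (flipConj (hC.rMatrix s)).toAlgHom (.id k Hᵐᵒᵖ)
        (leg13 (opT D) * leg23 (opT (LinearMap.lTensor E τ.toLinearMap C))) =
      leg13 (opT C) * leg23 (opT D) := by
  have hQ := (hC.rMatrix s).isUnit.map (includeLeft : _ →ₐ[k] (E ⊗[k] F) ⊗[k] Hᵐᵒᵖ)
  refine hQ.mul_right_cancel ?_
  exact (map_flipConj_mul ..).trans (hD.yangBaxter hC).symm

end Exchange

section Main

variable {k H E F : Type*} [CommSemiring k] [Semiring H] [HopfAlgebra k H] [Semiring E]
  [Algebra k E] [Semiring F] [Algebra k F] {C : E ⊗[k] H} {r : H →ₐ[k] E} {σ : H →ₐc[k] H}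
  {D : F ⊗[k] H} {s : H →ₐ[k] F} {τ τ' : H →ₐc[k] H}
  {actE : H →ₗ[k] E →ₗ[k] E} {coactE : E →ₗ[k] E ⊗[k] H}
  {actF actF' : H →ₗ[k] F →ₗ[k] F} {coactF coactF' : F →ₗ[k] F ⊗[k] H}

lemma isImplementedBy_flipConj_smashHom
    {mul : E ⊗[k] F →ₗ[k] E ⊗[k] F →ₗ[k] E ⊗[k] F} {act : H →ₗ[k] E ⊗[k] F →ₗ[k] E ⊗[k] F}
    {coact : E ⊗[k] F →ₗ[k] (E ⊗[k] F) ⊗[k] H}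
    (h : IsSmash actE coactE actF coactF mul act coact)
    (hE : IsInner C r σ actE coactE)
    (hF : IsInner (LinearMap.lTensor F σ.toLinearMap D) s τ actF coactF)
    (hF' : IsInner D (s.comp (σ : H →ₐ[k] H)) τ' actF' coactF') :
    IsImplementedBy act coact
      ((flipConj (hF'.isCorep.rMatrix r)).toAlgHom.toLinearMap ∘ₗ smashHom C s)
      (prodRep (s.comp (σ : H →ₐ[k] H)) τ' r) (leg13 (opT D) * leg23 (opT C)) := by
  have := (h.isImplementedBy_smashHom hE hF).map (flipConj (hF'.isCorep.rMatrix r)).toAlgHom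
  rwa [map_flipConj_leg13_mul_leg23 hE.isYetterDrinfeld, prodRep,
    convMap_flipConj_convMul hF'.isCorep hF'.isYetterDrinfeld] at this

theorem IsSmash.exists_linearEquiv
    {mul₁ : E ⊗[k] F →ₗ[k] E ⊗[k] F →ₗ[k] E ⊗[k] F} {act₁ : H →ₗ[k] E ⊗[k] F →ₗ[k] E ⊗[k] F}
    {coact₁ : E ⊗[k] F →ₗ[k] (E ⊗[k] F) ⊗[k] H}
    {mul₂ : F ⊗[k] E →ₗ[k] F ⊗[k] E →ₗ[k] F ⊗[k] E} {act₂ : H →ₗ[k] F ⊗[k] E →ₗ[k] F ⊗[k] E}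
    {coact₂ : F ⊗[k] E →ₗ[k] (F ⊗[k] E) ⊗[k] H}
    (h₁ : IsSmash actE coactE actF coactF mul₁ act₁ coact₁)
    (h₂ : IsSmash actF' coactF' actE coactE mul₂ act₂ coact₂)
    (hE : IsInner C r σ actE coactE)
    (hF : IsInner (LinearMap.lTensor F σ.toLinearMap D) s τ actF coactF)
    (hF' : IsInner D (s.comp (σ : H →ₐ[k] H)) τ' actF' coactF')
    (hC : IsUnit (opT C)) (hD : IsUnit (opT D)) :
    ∃ θ : E ⊗[k] F ≃ₗ[k] F ⊗[k] E,
      (∀ x y, θ (mul₁ x y) = mul₂ (θ x) (θ y)) ∧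
      θ (1 ⊗ₜ 1) = 1 ⊗ₜ 1 ∧
      (∀ h x, θ (act₁ h x) = act₂ h (θ x)) ∧
      ∀ x, coact₂ (θ x) = LinearMap.rTensor H θ.toLinearMap (coact₁ x) := by
  let φ := smashEquiv hC s
  let φ' := smashEquiv hD r
  let ψ := flipConj (hF'.isCorep.rMatrix r)
  let θ := φ ≪≫ₗ ψ.toLinearEquiv ≪≫ₗ φ'.symm
  have hθ (x : E ⊗[k] F) : φ' (θ x) = ψ (φ x) := φ'.apply_symm_apply _
  have hθ' : φ'.toLinearMap ∘ₗ θ.toLinearMap = ψ.toAlgHom.toLinearMap ∘ₗ φ.toLinearMap :=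
    LinearMap.ext hθ
  have hφ := isImplementedBy_flipConj_smashHom h₁ hE hF hF'
  have hφ' := h₂.isImplementedBy_smashHom hF' hE
  refine ⟨θ, fun x y ↦ φ'.injective ?_, φ'.injective ?_, fun h x ↦ φ'.injective ?_, fun x ↦
    (φ'.rTensor H).injective ?_⟩
  · calc φ' (θ (mul₁ x y)) = ψ (φ x * φ y) := by
          rw [hθ]; exact congrArg ψ (h₁.smashHom_mul hE hF x y)
      _ = φ' (mul₂ (θ x) (θ y)) := by
          rw [map_mul, ← hθ, ← hθ]; exact (h₂.smashHom_mul hF' hE _ _).symm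
  · calc φ' (θ (1 ⊗ₜ 1)) = ψ 1 := by rw [hθ]; exact congrArg ψ (smashHom_one hE.isCorep)
      _ = φ' (1 ⊗ₜ 1) := by rw [map_one]; exact (smashHom_one hF'.isCorep).symm
  · rw [hθ]
    exact hφ.act_eq_act hφ' (isUnit_prodRep ..) (hθ x).symm h
  · calc LinearMap.rTensor H φ'.toLinearMap (coact₂ (θ x))
        = LinearMap.rTensor H (ψ.toAlgHom.toLinearMap ∘ₗ φ.toLinearMap) (coact₁ x) :=
          (hφ.rTensor_coact_eq hφ' ((hD.map leg13).mul (hC.map leg23)) (hθ x).symm).symm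
      _ = LinearMap.rTensor H φ'.toLinearMap (LinearMap.rTensor H θ.toLinearMap (coact₁ x)) := by
          rw [← hθ', LinearMap.rTensor_comp_apply]

end Main

/-! ### Endomorphisms of Yetter–Drinfeld modules -/

section FiniteSums

lemma exists_finset_nat_sum_eq {ι X V : Type*} [Fintype ι] [Nonempty X] [AddCommMonoid V]
    (f : ι → X) (g : X → V) :
    ∃ (s : Finset ℕ) (f' : ℕ → X), ∑ i, g (f i) = ∑ i ∈ s, g (f' i) := by
  let e : ι ↪ ℕ := (Fintype.equivFin ι).toEmbedding.trans Fin.valEmbedding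
  refine ⟨Finset.univ.map e, Function.extend e f fun _ ↦ Classical.arbitrary X, ?_⟩
  rw [Finset.sum_map]
  exact Finset.sum_congr rfl fun i _ ↦ by rw [e.injective.extend_apply]

variable {k M N P : Type*} [CommSemiring k] [AddCommMonoid M] [Module k M]
  [AddCommMonoid N] [Module k N] [AddCommMonoid P] [Module k P]

lemma exists_nat_sum_tmul_eq (x : M ⊗[k] N) :
    ∃ (s : Finset ℕ) (m : ℕ → M) (n : ℕ → N), x = ∑ i ∈ s, m i ⊗ₜ[k] n i := by
  obtain ⟨d, m, n, rfl⟩ := TensorProduct.exists_sum_tmul_eq x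
  obtain ⟨s, f, hf⟩ := exists_finset_nat_sum_eq (fun i ↦ (m i, n i)) fun p : M × N ↦ p.1 ⊗ₜ[k] p.2
  exact ⟨s, fun i ↦ (f i).1, fun i ↦ (f i).2, hf⟩

lemma exists_nat_sum_tmul_tmul_eq (x : (M ⊗[k] N) ⊗[k] P) :
    ∃ (s : Finset ℕ) (m : ℕ → M) (n : ℕ → N) (p : ℕ → P),
      x = ∑ i ∈ s, (m i ⊗ₜ[k] n i) ⊗ₜ[k] p i := by
  obtain ⟨d, z, p, rfl⟩ := TensorProduct.exists_sum_tmul_eq x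
  choose d' m n hz using fun j ↦ TensorProduct.exists_sum_tmul_eq (z j)
  obtain ⟨s, f, hf⟩ := exists_finset_nat_sum_eq
    (fun i : (j : Fin d) × Fin (d' j) ↦ (m i.1 i.2, n i.1 i.2, p i.1))
    fun q : M × N × P ↦ (q.1 ⊗ₜ[k] q.2.1) ⊗ₜ[k] q.2.2
  refine ⟨s, fun i ↦ (f i).1, fun i ↦ (f i).2.1, fun i ↦ (f i).2.2, hf ▸ ?_⟩
  simp only [Fintype.sum_sigma, ← TensorProduct.sum_tmul, ← hz]

end FiniteSums

section CoactElem

variable {k H M : Type*} [CommRing k] [AddCommGroup M] [Module k M] [Module.Free k M]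
  [Module.Finite k M]

lemma rTensorHomEquivHomRTensor_apply_apply {W : Type*} [AddCommGroup W] [Module k W]
    (X : Module.End k M ⊗[k] W) (m : M) :
    rTensorHomEquivHomRTensor k M M W X m = LinearMap.rTensor W (LinearMap.applyₗ m) X := by
  induction X using TensorProduct.induction_on <;> simp_all [rTensorHomEquivHomRTensor_apply]

lemma ext_rTensor_applyₗ {W : Type*} [AddCommGroup W] [Module k W]
    {X Y : Module.End k M ⊗[k] W}
    (h : ∀ m : M, LinearMap.rTensor W (LinearMap.applyₗ m) X =
      LinearMap.rTensor W (LinearMap.applyₗ m) Y) : X = Y :=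
  (rTensorHomEquivHomRTensor k M M W).injective <| LinearMap.ext fun m ↦ by
    rw [rTensorHomEquivHomRTensor_apply_apply, rTensorHomEquivHomRTensor_apply_apply, h]

/-- The element of `End M ⊗ H` corresponding to a linear map `M → M ⊗ H`. -/
def coactElem [AddCommGroup H] [Module k H] (coact : M →ₗ[k] M ⊗[k] H) : Module.End k M ⊗[k] H :=
  (rTensorHomEquivHomRTensor k M M H).symm coact

section Module

variable [AddCommGroup H] [Module k H] (coact : M →ₗ[k] M ⊗[k] H)

lemma rTensor_applyₗ_coactElem (m : M) :
    LinearMap.rTensor H (LinearMap.applyₗ m) (coactElem coact) = coact m := by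
  rw [← rTensorHomEquivHomRTensor_apply_apply, coactElem, LinearEquiv.apply_symm_apply]

lemma rTensor_applyₗ_lTensor_coactElem {W : Type*} [AddCommGroup W] [Module k W] (g : H →ₗ[k] W)
    (m : M) : LinearMap.rTensor W (LinearMap.applyₗ m) (LinearMap.lTensor _ g (coactElem coact)) =
      LinearMap.lTensor M g (coact m) := by
  rw [← LinearMap.comp_apply, LinearMap.rTensor_comp_lTensor, ← LinearMap.lTensor_comp_rTensor,
    LinearMap.comp_apply, rTensor_applyₗ_coactElem]

lemma lTensor_coactElem (b : H →ₗ[k] H) :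
    LinearMap.lTensor _ b (coactElem coact) = coactElem (LinearMap.lTensor M b ∘ₗ coact) :=
  ext_rTensor_applyₗ fun m ↦ by
    rw [rTensor_applyₗ_lTensor_coactElem, rTensor_applyₗ_coactElem, LinearMap.comp_apply]

lemma lTensor_coactElem_comp_lTensor_symm (b : H ≃ₗ[k] H) :
    LinearMap.lTensor _ b.toLinearMap
      (coactElem (LinearMap.lTensor M b.symm.toLinearMap ∘ₗ coact)) = coactElem coact := by
  rw [← lTensor_coactElem, ← LinearMap.lTensor_comp_apply, LinearEquiv.comp_symm]
  exact LinearMap.lTensor_id_apply ..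

lemma exists_nat_sum_coactElem :
    ∃ (t : Finset ℕ) (c : ℕ → Module.End k M) (x : ℕ → H),
      coactElem coact = ∑ i ∈ t, c i ⊗ₜ[k] x i ∧ ∀ m, coact m = ∑ i ∈ t, c i m ⊗ₜ[k] x i := by
  obtain ⟨t, c, x, hC⟩ := exists_nat_sum_tmul_eq (coactElem coact)
  exact ⟨t, c, x, hC, fun m ↦ by rw [← rTensor_applyₗ_coactElem coact, hC]; simp⟩

end Module

lemma isCorep_coactElem [Ring H] [Bialgebra k H] {coact : M →ₗ[k] M ⊗[k] H}
    (hcomul : ∀ m, LinearMap.rTensor H coact (coact m) =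
      (TensorProduct.assoc k M H H).symm (LinearMap.lTensor M comul (coact m)))
    (hcounit : ∀ m, TensorProduct.rid k M (LinearMap.lTensor M counit (coact m)) = m) :
    IsCorep (coactElem coact) where
  comul := by
    obtain ⟨t, c, x, hC, hm⟩ := exists_nat_sum_coactElem coact
    refine ext_rTensor_applyₗ fun m ↦ ?_
    calc _ = TensorProduct.assoc k M H H (LinearMap.rTensor H coact (coact m)) := by
          rw [rTensor_applyₗ_lTensor_coactElem, hcomul, LinearEquiv.apply_symm_apply]
      _ = ∑ j ∈ t, ∑ i ∈ t, c i (c j m) ⊗ₜ[k] (x i ⊗ₜ[k] x j) := by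
          simp [hm, TensorProduct.sum_tmul]
      _ = _ := by
          rw [hC, Finset.sum_comm]
          simp [Finset.sum_mul_sum]
  counit := by
    refine ext_rTensor_applyₗ fun m ↦ (TensorProduct.rid k M).injective ?_
    rw [rTensor_applyₗ_lTensor_coactElem, hcounit]
    simp [one_def]

end CoactElem

section EndModule

variable {k H : Type} [Field k] [Ring H] [HopfAlgebra k H] {M : Type} [AddCommGroup M] [Module k M]

lemma exists_linearEquiv_antipode {Sinv : H → H} (hS : GYD.IsAntipodeInv k H Sinv) :
    ∃ S : H ≃ₗ[k] H, S.toLinearMap = HopfAlgebra.antipode k ∧ ⇑S.symm = Sinv := by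
  refine ⟨.ofBijective (HopfAlgebra.antipode k)
    ⟨Function.LeftInverse.injective hS.2, Function.RightInverse.surjective hS.1⟩, rfl, ?_⟩
  ext x
  exact (LinearEquiv.symm_apply_eq _).mpr (hS.1 x).symm

lemma exists_bialgEquiv {α : H ≃ₗ[k] H} (hα : GYD.IsHopfAut k H α) :
    ∃ a : H ≃ₐc[k] H, a.toAlgEquiv.toLinearEquiv = α := by
  obtain ⟨hmul, hone, hcomul, hcounit⟩ := hα
  refine ⟨.ofAlgEquiv (.ofLinearEquiv α hone hmul) ?_ ?_, rfl⟩
  · ext x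
    exact hcounit x
  · ext x
    exact (hcomul x).symm

lemma eq_adj_of_endActChar {θ : H → H} {act : H →ₗ[k] M →ₗ[k] M}
    {actE : H →ₗ[k] Module.End k M →ₗ[k] Module.End k M} (h : GYD.EndActChar k H θ act actE)
    {r : H →ₐ[k] Module.End k M} (hr : ∀ x, r x = act (θ x)) : actE = (adj r).toLinearMap := by
  ext x u m
  obtain ⟨s, p, q, hx⟩ := exists_nat_sum_tmul_eq (comul (R := k) x)
  rw [h x u m s p q hx, AlgHom.toLinearMap_apply, adj_apply_apply r ⟨s, p, q, hx.symm⟩]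
  simp [hr]

/-- The representation of `H` on `M` underlying a Yetter–Drinfeld module. -/
def actHom {Sinv α β : H → H} {act : H →ₗ[k] M →ₗ[k] M} {coact : M →ₗ[k] M ⊗[k] H}
    (hM : GYD.IsYD k H Sinv α β act coact) : H →ₐ[k] Module.End k M :=
  .ofLinearMap act (LinearMap.ext hM.1) fun g h ↦ LinearMap.ext (hM.2.1 g h)

@[simp]
lemma actHom_apply {Sinv α β : H → H} {act : H →ₗ[k] M →ₗ[k] M} {coact : M →ₗ[k] M ⊗[k] H}
    (hM : GYD.IsYD k H Sinv α β act coact) (x : H) : actHom hM x = act x := rfl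

variable [FiniteDimensional k M]

lemma opT_eq_of_endCoactChar {S : H ≃ₗ[k] H} {coact : M →ₗ[k] M ⊗[k] H}
    {coactE : Module.End k M →ₗ[k] Module.End k M ⊗[k] H}
    (h : GYD.EndCoactChar k H S.symm coact coactE) (u : Module.End k M) :
    opT (coactE u) = opT (coactElem coact) * (u ⊗ₜ 1) *
      opT (LinearMap.lTensor _ S.symm.toLinearMap (coactElem coact)) := by
  obtain ⟨t, c, x, hC, hm⟩ := exists_nat_sum_coactElem coact
  have hu : coactE u = ∑ j ∈ t, ∑ l ∈ t, (c l * u * c j) ⊗ₜ[k] (S.symm (x j) * x l) :=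
    ext_rTensor_applyₗ fun m ↦ by
      rw [h u m t (c · m) x (fun _ ↦ t) (fun j l ↦ c l (u (c j m))) (fun _ ↦ x) (hm m)
        fun _ _ ↦ hm _]
      simp
  rw [hu, hC]
  simp [Finset.sum_mul, Finset.mul_sum]

lemma semiconjBy_opT_of_endCoactChar {S : H ≃ₗ[k] H} (hS : S.toLinearMap = HopfAlgebra.antipode k)
    {coact : M →ₗ[k] M ⊗[k] H} (hC : IsCorep (coactElem coact))
    {coactE : Module.End k M →ₗ[k] Module.End k M ⊗[k] H}
    (h : GYD.EndCoactChar k H S.symm coact coactE) (u : Module.End k M) :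
    SemiconjBy (opT (coactElem coact)) (u ⊗ₜ 1) (opT (coactE u)) := by
  rw [SemiconjBy, opT_eq_of_endCoactChar h, mul_assoc _ (opT _), hC.opT_lTensor_symm_mul_opT S hS,
    mul_one]

variable {S : H ≃ₗ[k] H} {α β : H ≃ₐc[k] H} {act : H →ₗ[k] M →ₗ[k] M} {coact : M →ₗ[k] M ⊗[k] H}

lemma opT_coactElem_mul (hM : GYD.IsYD k H S.symm α β act coact) {x : H} {s : Finset ℕ}
    {a b c : ℕ → H}
    (hx : LinearMap.rTensor H (comul (R := k)) (comul x) = ∑ i ∈ s, (a i ⊗ₜ[k] b i) ⊗ₜ[k] c i) :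
    opT (coactElem coact) * (actHom hM x ⊗ₜ 1) =
      ∑ i ∈ s, (1 ⊗ₜ op (α (S.symm (a i)))) * ((actHom hM (b i) ⊗ₜ 1) * opT (coactElem coact)) *
        (1 ⊗ₜ op (β (c i))) := by
  obtain ⟨t, e, y, hC, hm⟩ := exists_nat_sum_coactElem coact
  have h : ∑ l ∈ t, (e l * actHom hM x) ⊗ₜ[k] y l =
      ∑ i ∈ s, ∑ l ∈ t, (actHom hM (b i) * e l) ⊗ₜ[k] (β (c i) * y l * α (S.symm (a i))) :=
    ext_rTensor_applyₗ fun m ↦ by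
      have := hM.2.2.2.2 x m s t a b c (e · m) y hx (hm m)
      rw [hm] at this
      simpa using this
  rw [hC]
  simpa [Finset.sum_mul, Finset.mul_sum, mul_assoc] using congrArg opT h

lemma isYetterDrinfeld_coactElem (hS : S.toLinearMap = HopfAlgebra.antipode k)
    (hM : GYD.IsYD k H S.symm α β act coact) :
    IsYetterDrinfeld (coactElem coact) ((actHom hM).comp (α.symm : H →ₐ[k] H))
      (α.symm.trans β : H →ₐc[k] H).toLinearMap := by
  let C := opT (coactElem coact)
  let ρ : WithConv (H →ₗ[k] Module.End k M ⊗[k] Hᵐᵒᵖ) :=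
    convMap includeLeft (toConv (actHom hM).toLinearMap)
  let opβ : WithConv (H →ₗ[k] Module.End k M ⊗[k] Hᵐᵒᵖ) :=
    convMap includeRight (toConv (convOp.ofConv ∘ₗ β.toLinearMap))
  let opα : (WithConv (H →ₗ[k] Module.End k M ⊗[k] Hᵐᵒᵖ))ˣ :=
    Units.map (convMap (includeRight.comp (AlgHom.op (α : H →ₐ[k] H)))).toMonoidHom
      (convOpUnit S hS)
  have hconv : convConst C * ρ = opα⁻¹.val * (ρ * convConst C) * opβ := by
    ext x
    obtain ⟨s, a, b, c, hx⟩ := exists_nat_sum_tmul_tmul_eq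
      (LinearMap.rTensor H (comul (R := k)) (comul x))
    refine (convConst_mul_apply ..).trans ((opT_coactElem_mul hM hx).trans ?_)
    refine ((convMul₃_apply _ _ _ hx).trans (Finset.sum_congr rfl fun i _ ↦ ?_)).symm
    rw [mul_convConst_apply]
    rfl
  -- Convolving with `opα` cancels the factor `op ∘ α ∘ S⁻¹`; then substitute `α⁻¹`.
  have hα : opα.val * convConst C * ρ = ρ * convConst C * opβ :=
    (mul_assoc ..).trans <|
      (Units.eq_inv_mul_iff_mul_eq opα).mp (hconv.trans (mul_assoc ..))
  have hα' : convComap (α.symm : H →ₗc[k] H) opα.val = convMap includeRight convOp := by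
    ext x
    exact congrArg (fun y ↦ (1 : Module.End k M) ⊗ₜ[k] op y) (α.apply_symm_apply x)
  have h := congrArg (convComap (α.symm : H →ₗc[k] H)) hα
  rw [map_mul, map_mul, map_mul, map_mul, convComap_convConst, hα'] at h
  exact h

end EndModule

section YetterDrinfeldModule

variable {k H : Type} [Field k] [Ring H] [HopfAlgebra k H] {M : Type} [AddCommGroup M] [Module k M]
  [FiniteDimensional k M] {S : H ≃ₗ[k] H} {α β : H ≃ₐc[k] H} {act : H →ₗ[k] M →ₗ[k] M}
  {coact : M →ₗ[k] M ⊗[k] H} {actE : H →ₗ[k] Module.End k M →ₗ[k] Module.End k M}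
  {coactE : Module.End k M →ₗ[k] Module.End k M ⊗[k] H}

lemma isInner_end (hS : S.toLinearMap = HopfAlgebra.antipode k)
    (hM : GYD.IsYD k H S.symm α β act coact)
    (hact : GYD.EndActChar k H α.symm act actE)
    (hcoact : GYD.EndCoactChar k H S.symm coact coactE) :
    IsInner (coactElem coact) ((actHom hM).comp (α.symm : H →ₐ[k] H))
      (α.symm.trans β : H →ₐc[k] H) actE coactE where
  isCorep := isCorep_coactElem hM.2.2.1 hM.2.2.2.1
  isYetterDrinfeld := isYetterDrinfeld_coactElem hS hM
  act_eq := eq_adj_of_endActChar hact fun _ ↦ rfl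
  coact := semiconjBy_opT_of_endCoactChar hS (isCorep_coactElem hM.2.2.1 hM.2.2.2.1) hcoact

lemma isInner_end_twist (hS : S.toLinearMap = HopfAlgebra.antipode k)
    (hM : GYD.IsYD k H S.symm α β act coact) (b : H ≃ₐc[k] H) {ζ : H →ₗ[k] H}
    {θ : H → H} (hθ : ∀ x, α.symm (b x) = ζ (θ x))
    (hact : GYD.EndActChar k H θ (act ∘ₗ ζ) actE)
    (hcoact : GYD.EndCoactChar k H S.symm
      (LinearMap.lTensor M b.symm.toLinearMap ∘ₗ coact) coactE) :
    IsInner (coactElem (LinearMap.lTensor M b.symm.toLinearMap ∘ₗ coact))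
      (((actHom hM).comp (α.symm : H →ₐ[k] H)).comp (b : H →ₐ[k] H))
      (b.trans ((α.symm.trans β).trans b.symm) : H →ₐc[k] H) actE coactE := by
  have hD := (isCorep_coactElem hM.2.2.1 hM.2.2.2.1).lTensor (b.symm : H →ₐc[k] H)
  have hYD := (isYetterDrinfeld_coactElem hS hM).twist (b : H →ₐc[k] H) b.symm b.symm_apply_apply
  have hC := lTensor_coactElem coact (b.symm : H →ₐc[k] H).toLinearMap
  rw [hC] at hD hYD
  exact ⟨hD, hYD, eq_adj_of_endActChar hact fun x ↦ congrArg act (hθ x),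
    semiconjBy_opT_of_endCoactChar hS hD hcoact⟩

end YetterDrinfeldModule

section SmashProduct

variable {k H E F : Type} [Field k] [Ring H] [HopfAlgebra k H] [Ring E] [Algebra k E] [Ring F]
  [Algebra k F]

lemma isSmash_of_smashMulChar {actE : H →ₗ[k] E →ₗ[k] E} {coactE : E →ₗ[k] E ⊗[k] H}
    {actF : H →ₗ[k] F →ₗ[k] F} {coactF : F →ₗ[k] F ⊗[k] H}
    {mul : E ⊗[k] F →ₗ[k] E ⊗[k] F →ₗ[k] E ⊗[k] F} {act : H →ₗ[k] E ⊗[k] F →ₗ[k] E ⊗[k] F}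
    {coact : E ⊗[k] F →ₗ[k] (E ⊗[k] F) ⊗[k] H} (hmul : GYD.SmashMulChar k H actF coactE mul)
    (hact : GYD.TensorActChar k H id id actE actF act)
    (hcoact : GYD.TensorCoactChar k H coactE coactF coact) :
    IsSmash actE coactE actF coactF mul act coact where
  mul_tmul_tmul a a' b b' := by
    obtain ⟨t, c, x, hc⟩ := exists_nat_sum_tmul_eq (coactE a')
    rw [hmul a a' b b' t c x hc, hc]
    simp [Finset.mul_sum, Finset.sum_mul]
  flip_act_tmul a b := by
    ext x
    obtain ⟨t, p, q, hx⟩ := exists_nat_sum_tmul_eq (comul (R := k) x)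
    refine (hact x a b t p q hx).trans ?_
    rw [(⟨t, p, q, hx.symm⟩ : Coalgebra.Repr k x ℕ).convMul_apply]
    simp
  opT_coact_tmul a b := by
    obtain ⟨t, c, x, hc⟩ := exists_nat_sum_tmul_eq (coactE a)
    obtain ⟨t', d, y, hd⟩ := exists_nat_sum_tmul_eq (coactF b)
    rw [hcoact a b t t' c x d y hc hd, hc, hd]
    simp [leg13, leg23, Finset.sum_mul_sum]

end SmashProduct

end EndSmash

theorem statement_18
    (k H : Type) [Field k] [Ring H] [HopfAlgebra k H]
    (Sinv : H → H) (hS : GYD.IsAntipodeInv k H Sinv)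
    (α β γ δ : H ≃ₗ[k] H)
    (hα : GYD.IsHopfAut k H α) (hβ : GYD.IsHopfAut k H β)
    (hγ : GYD.IsHopfAut k H γ) (hδ : GYD.IsHopfAut k H δ)
    (M N : Type) [AddCommGroup M] [Module k M] [AddCommGroup N] [Module k N]
    [FiniteDimensional k M] [FiniteDimensional k N]
    (actM : H →ₗ[k] M →ₗ[k] M) (coactM : M →ₗ[k] M ⊗[k] H)
    (actN : H →ₗ[k] N →ₗ[k] N) (coactN : N →ₗ[k] N ⊗[k] H)
    (hM : GYD.IsYD k H Sinv ⇑α ⇑β actM coactM)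
    (hN : GYD.IsYD k H Sinv ⇑γ ⇑δ actN coactN)
    -- End(M)
    (actEM : H →ₗ[k] Module.End k M →ₗ[k] Module.End k M)
    (coactEM : Module.End k M →ₗ[k] Module.End k M ⊗[k] H)
    (hactEM : GYD.EndActChar k H ⇑α.symm actM actEM)
    (hcoactEM : GYD.EndCoactChar k H Sinv coactM coactEM)
    -- End(N)
    (actEN : H →ₗ[k] Module.End k N →ₗ[k] Module.End k N)
    (coactEN : Module.End k N →ₗ[k] Module.End k N ⊗[k] H)
    (hactEN : GYD.EndActChar k H ⇑γ.symm actN actEN)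
    (hcoactEN : GYD.EndCoactChar k H Sinv coactN coactEN)
    -- End(^M N), where ^M N = ^{(α,β)}N is N with action h ⇀ n = γ⁻¹βγα⁻¹(h)·n and
    -- coaction n ↦ n₍₀₎ ⊗ αβ⁻¹(n₍₁₎); its first automorphism is αγα⁻¹
    (actETw : H →ₗ[k] Module.End k N →ₗ[k] Module.End k N)
    (coactETw : Module.End k N →ₗ[k] Module.End k N ⊗[k] H)
    (hactETw : GYD.EndActChar k H (fun h => α (γ.symm (α.symm h)))
      (actN ∘ₗ (α.symm.trans (γ.trans (β.trans γ.symm))).toLinearMap) actETw)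
    (hcoactETw : GYD.EndCoactChar k H Sinv
      ((LinearMap.lTensor N (β.symm.trans α).toLinearMap) ∘ₗ coactN) coactETw)
    -- the smash product End(M) # End(N)
    (mul₁ : (Module.End k M ⊗[k] Module.End k N) →ₗ[k]
        (Module.End k M ⊗[k] Module.End k N) →ₗ[k] (Module.End k M ⊗[k] Module.End k N))
    (hmul₁ : GYD.SmashMulChar k H actEN coactEM mul₁)
    (actS₁ : H →ₗ[k] (Module.End k M ⊗[k] Module.End k N)
        →ₗ[k] (Module.End k M ⊗[k] Module.End k N))
    (coactS₁ : Module.End k M ⊗[k] Module.End k N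
        →ₗ[k] (Module.End k M ⊗[k] Module.End k N) ⊗[k] H)
    (hactS₁ : GYD.TensorActChar k H id id actEM actEN actS₁)
    (hcoactS₁ : GYD.TensorCoactChar k H coactEM coactEN coactS₁)
    -- the smash product End(^M N) # End(M)
    (mul₂ : (Module.End k N ⊗[k] Module.End k M) →ₗ[k]
        (Module.End k N ⊗[k] Module.End k M) →ₗ[k] (Module.End k N ⊗[k] Module.End k M))
    (hmul₂ : GYD.SmashMulChar k H actEM coactETw mul₂)
    (actS₂ : H →ₗ[k] (Module.End k N ⊗[k] Module.End k M)
        →ₗ[k] (Module.End k N ⊗[k] Module.End k M))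
    (coactS₂ : Module.End k N ⊗[k] Module.End k M
        →ₗ[k] (Module.End k N ⊗[k] Module.End k M) ⊗[k] H)
    (hactS₂ : GYD.TensorActChar k H id id actETw actEM actS₂)
    (hcoactS₂ : GYD.TensorCoactChar k H coactETw coactEM coactS₂) :
    -- End(M) # End(N) ≅ End(^M N) # End(M) as algebras in the Yetter-Drinfeld category
    ∃ θ : (Module.End k M ⊗[k] Module.End k N) ≃ₗ[k] (Module.End k N ⊗[k] Module.End k M),
      (∀ x y : Module.End k M ⊗[k] Module.End k N, θ (mul₁ x y) = mul₂ (θ x) (θ y)) ∧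
      θ ((1 : Module.End k M) ⊗ₜ[k] (1 : Module.End k N))
          = (1 : Module.End k N) ⊗ₜ[k] (1 : Module.End k M) ∧
      (∀ (h : H) (x : Module.End k M ⊗[k] Module.End k N), θ (actS₁ h x) = actS₂ h (θ x)) ∧
      (∀ x : Module.End k M ⊗[k] Module.End k N,
          coactS₂ (θ x) = LinearMap.rTensor H θ.toLinearMap (coactS₁ x)) := by
  obtain ⟨S, hantipode, rfl⟩ := EndSmash.exists_linearEquiv_antipode hS
  obtain ⟨α, rfl⟩ := EndSmash.exists_bialgEquiv hα
  obtain ⟨β, rfl⟩ := EndSmash.exists_bialgEquiv hβ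
  obtain ⟨γ, rfl⟩ := EndSmash.exists_bialgEquiv hγ
  obtain ⟨δ, rfl⟩ := EndSmash.exists_bialgEquiv hδ
  let σ : H ≃ₐc[k] H := α.symm.trans β
  have hE := EndSmash.isInner_end hantipode hM hactEM hcoactEM
  have hF := EndSmash.isInner_end hantipode hN hactEN hcoactEN
  have hσ (x : H) : γ.symm (β (α.symm x)) =
      γ.symm (β (γ (α.symm (α (γ.symm (α.symm x)))))) := by simp
  have hF' := EndSmash.isInner_end_twist hantipode hN σ hσ hactETw hcoactETw
  rw [← EndSmash.lTensor_coactElem_comp_lTensor_symm coactN (σ : H ≃ₗ[k] H)] at hF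
  exact (EndSmash.isSmash_of_smashMulChar hmul₁ hactS₁ hcoactS₁).exists_linearEquiv
    (EndSmash.isSmash_of_smashMulChar hmul₂ hactS₂ hcoactS₂) hE hF hF'
    (hE.isCorep.isUnit_opT S hantipode) (hF'.isCorep.isUnit_opT S hantipode)

end
end

section
/- Let α, β ∈ Aut_Hopf(H) and M a finite-dimensional (α,β)-Yetter-Drinfeld module, and set A = End(M), an algebra in _H𝒴𝒟^H. Then A is H-Azumaya: both maps F : A # A̅ → End(A), F(a # b)(c) = a c₍₀₎ (c₍₁₎·b), and G : A̅ # A → End(A)^op, G(a # b)(c) = a₍₀₎ (a₍₁₎·c) b, are bijective, where End(A) carries the canonical structures (h·u)(a) = h₁·u(S(h₂)·a) and u₍₀₎(a) ⊗ u₍₁₎ = u(a₍₀₎)₍₀₎ ⊗ S⁻¹(a₍₁₎) u(a₍₀₎)₍₁₎, and End(A)^op carries the structures (h·u)(a) = h₂·u(S⁻¹(h₁)·a) and u₍₀₎(a) ⊗ u₍₁₎ = u(a₍₀₎)₍₀₎ ⊗ u(a₍₀₎)₍₁₎ S(a₍₁₎). -/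
open TensorProduct

noncomputable section

/-!
Write the coaction of `M` as `m ↦ Σ X m ⊗ x`. The element `ρ = Σ X ⊗ x` of `End M ⊗ H` is a
corepresentation, so `f ↦ (id ⊗ f) ρ` is multiplicative for convolution; hence `(id ⊗ f) ρ` is a
unit when `f` is an algebra homomorphism and, the antipode being bijective, also when `f` is an
antihomomorphism. Let `A = End M` and let `σ(h)` be the action of `α⁻¹(h)` on `M`. Then `H` acts on
`A` by `h · b = σ(h₁) b σ(S h₂)`, and the coaction is `c ↦ ρ (c ⊗ 1) ρ⁻¹`, computed in `A ⊗ Hᵐᵒᵖ`.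
Substituting, one finds `c₀ (c₁ · b) = Σ X c V(U (x · b))`, where `V(b) = Σ X b σ(x)` is
bijective and `U = V⁻¹(1) = Σ X σ(S⁻¹ x)`. The Yetter-Drinfeld condition amounts to
`U α⁻¹(S⁻¹(β(h))) = S(h) U`, which turns `V(U) = 1` into a left inverse of `U`, so `U` is a unit of
the finite-dimensional algebra `A`. Therefore `F` and `G` are composites of multiplications by
units, of `V`, and of the isomorphism `A ⊗ Aᵐᵒᵖ ≅ End A`, all of them bijective.
-/

namespace YetterDrinfeld

open Coalgebra HopfAlgebra MulOpposite WithConv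

section Convolution

variable {k H B : Type*} [CommRing k] [Ring H] [HopfAlgebra k H] [Ring B] [Algebra k B]

/-- The convolution unit of an algebra homomorphism `f` out of a Hopf algebra, with inverse
`f ∘ antipode`. -/
def convUnit (f : H →ₐ[k] B) : (WithConv (H →ₗ[k] B))ˣ where
  val := toConv f.toLinearMap
  inv := toConv (f.toLinearMap ∘ₗ antipode k)
  val_inv := by
    ext h
    simp [(ℛ k h).convMul_apply, ← map_mul, ← map_sum,
      sum_mul_antipode_eq_algebraMap_counit]
  inv_val := by
    ext h
    simp [(ℛ k h).convMul_apply, ← map_mul, ← map_sum,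
      sum_antipode_mul_eq_algebraMap_counit]

theorem map_antipode {K : Type*} [Ring K] [HopfAlgebra k K] (φ : H →ₐc[k] K) (h : H) :
    φ (antipode k h) = antipode k (φ h) := by
  have right_inv : toConv (φ : H →ₗ[k] K) * toConv (antipode k ∘ₗ (φ : H →ₗ[k] K)) = 1 := by
    have := LinearMap.convMul_comp_coalgHom_distrib
      (toConv LinearMap.id) (toConv (antipode k)) (φ : H →ₗc[k] K)
    rw [LinearMap.id_mul_antipode] at this
    refine WithConv.ofConv_injective (this.symm.trans ?_)
    ext x
    simp [LinearMap.convOne_def]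
  have key := left_inv_eq_right_inv (convUnit (φ : H →ₐ[k] K)).inv_val right_inv
  exact congr($key h)

variable (S : H ≃ₗ[k] H) (hS : ∀ h, S h = antipode k h)
include hS

theorem antipodeInv_mul (g h : H) : S.symm (g * h) = S.symm h * S.symm g := by
  apply S.injective
  simp only [hS, antipode_mul_antidistrib]
  simp only [← hS, S.apply_symm_apply]

theorem antipodeInv_algebraMap (r : k) : S.symm (algebraMap k H r) = algebraMap k H r := by
  rw [S.symm_apply_eq, hS, Algebra.algebraMap_eq_smul_one, map_smul, antipode_one]

theorem sum_antipodeInv_mul {ι : Type*} {h : H} (r : Coalgebra.Repr k h ι) :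
    ∑ i ∈ r.index, S.symm (r.right i) * r.left i = algebraMap k H (counit h) := by
  have := congrArg S.symm (sum_antipode_mul_eq_algebraMap_counit r)
  simpa [antipodeInv_mul S hS, antipodeInv_algebraMap S hS, ← hS] using this

theorem sum_mul_antipodeInv {ι : Type*} {h : H} (r : Coalgebra.Repr k h ι) :
    ∑ i ∈ r.index, r.right i * S.symm (r.left i) = algebraMap k H (counit h) := by
  have := congrArg S.symm (sum_mul_antipode_eq_algebraMap_counit r)
  simpa [antipodeInv_mul S hS, antipodeInv_algebraMap S hS, ← hS] using this

/-- For an algebra homomorphism `f` out of a Hopf algebra with bijective antipode `S`, the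
convolution unit `h ↦ op (f h)` of the opposite algebra, with inverse `h ↦ op (f (S⁻¹ h))`. -/
def opConvUnit (f : H →ₐ[k] B) : (WithConv (H →ₗ[k] Bᵐᵒᵖ))ˣ where
  val := toConv ((opLinearEquiv k).toLinearMap ∘ₗ f.toLinearMap)
  inv := toConv ((opLinearEquiv k).toLinearMap ∘ₗ f.toLinearMap ∘ₗ S.symm.toLinearMap)
  val_inv := by
    ext h
    apply unop_injective
    simp [(ℛ k h).convMul_apply, ← map_mul, ← map_sum, sum_antipodeInv_mul S hS]
  inv_val := by
    ext h
    apply unop_injective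
    simp [(ℛ k h).convMul_apply, ← map_mul, ← map_sum, sum_mul_antipodeInv S hS]

end Convolution

theorem lTensor_mul_lTensor {k A H B : Type*} [CommRing k] [Ring A] [Algebra k A] [Ring H]
    [Algebra k H] [Ring B] [Algebra k B] (f g : H →ₗ[k] B) (z w : A ⊗[k] H) :
    f.lTensor A z * g.lTensor A w =
      (LinearMap.mul' k B ∘ₗ TensorProduct.map f g).lTensor A
        (Algebra.TensorProduct.map (.id k A)
            (Algebra.TensorProduct.includeLeft : H →ₐ[k] H ⊗[k] H) z *
          Algebra.TensorProduct.map (.id k A) Algebra.TensorProduct.includeRight w) := by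
  induction z with
  | zero => simp
  | add z₁ z₂ h₁ h₂ => simp only [map_add, add_mul, h₁, h₂]
  | tmul a x =>
    induction w with
    | zero => simp
    | add w₁ w₂ h₁ h₂ => simp only [map_add, mul_add, h₁, h₂]
    | tmul b y => simp

section Corepresentation

variable {k A H B : Type*} [CommRing k] [Ring A] [Algebra k A] [Ring H] [Ring B] [Algebra k B]
  [Bialgebra k H]

/-- `ρ = Σ X ⊗ x` is a corepresentation of the coalgebra `H` with coefficients in `A`:
`Σ X ⊗ Δ x = ρ₁₂ ρ₁₃` in `A ⊗ H ⊗ H` and `Σ ε(x) X = 1`. For `A = End M` this says that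
`m ↦ Σ X m ⊗ x` is a right coaction on `M`. -/
structure IsCorepresentation (ρ : A ⊗[k] H) : Prop where
  lTensor_comul : (Coalgebra.comul (R := k)).lTensor A ρ =
    Algebra.TensorProduct.map (.id k A) Algebra.TensorProduct.includeLeft ρ *
      Algebra.TensorProduct.map (.id k A) Algebra.TensorProduct.includeRight ρ
  lTensor_counit : (Coalgebra.counit (R := k)).lTensor A ρ = 1

variable {ρ : A ⊗[k] H} (hρ : IsCorepresentation ρ)

namespace IsCorepresentation

/-- The evaluation `f ↦ (id ⊗ f) ρ` of a corepresentation, as a homomorphism from the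
convolution algebra. -/
def eval : WithConv (H →ₗ[k] B) →* A ⊗[k] B where
  toFun f := f.ofConv.lTensor A ρ
  map_one' := by
    rw [LinearMap.convOne_def]
    simp [LinearMap.lTensor_comp, hρ.lTensor_counit, Algebra.TensorProduct.one_def]
  map_mul' f g := by
    rw [lTensor_mul_lTensor, ← hρ.lTensor_comul, LinearMap.convMul_def]
    simp [LinearMap.lTensor_comp]

end IsCorepresentation

end Corepresentation

/-- Right multiplication along `σ : H → A`, the homomorphism `h ↦ (b ↦ b σ(h))` into
`(End A)ᵐᵒᵖ`. -/
def rightMulHom {k A H : Type*} [CommRing k] [Ring A] [Algebra k A] [Ring H] [Algebra k H]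
    (σ : H →ₐ[k] A) : H →ₐ[k] (Module.End k A)ᵐᵒᵖ :=
  AlgHom.opComm.symm ((Algebra.lsmul k k A).comp σ.op)

section AdjointAction

variable {k A H : Type*} [CommRing k] [Ring A] [Algebra k A] [Ring H] [HopfAlgebra k H]

/-- The adjoint action `h · b = σ(h₁) b σ(S h₂)` of `H` on `A` along `σ : H → A`. -/
def adjointAction (σ : H →ₐ[k] A) : H →ₐ[k] Module.End k A :=
  ((AlgHom.mulLeftRight k A).comp
    (Algebra.TensorProduct.map σ (σ.op.comp (antipodeAlgHomOp k H)))).comp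
      (Bialgebra.comulAlgHom k H)

theorem adjointAction_apply_of_comul_eq (σ : H →ₐ[k] A) {ι : Type*} {s : Finset ι}
    {p q : ι → H} {h : H} (hpq : comul h = ∑ i ∈ s, p i ⊗ₜ[k] q i) (b : A) :
    adjointAction σ h b = ∑ i ∈ s, σ (p i) * b * σ (antipode k (q i)) := by
  simp [adjointAction, hpq]

theorem adjointAction_eq_conv (σ : H →ₐ[k] A) :
    toConv (adjointAction σ).toLinearMap = toConv ((LinearMap.mul k A) ∘ₗ σ.toLinearMap) *
      toConv ((LinearMap.mul k A).flip ∘ₗ σ.toLinearMap ∘ₗ antipode k) := by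
  ext h b
  simp [(ℛ k h).convMul_apply, adjointAction_apply_of_comul_eq σ (ℛ k h).eq.symm, mul_assoc]

variable (S : H ≃ₗ[k] H) (hS : ∀ h, S h = antipode k h)

theorem opConvUnit_adjointAction (σ : H →ₐ[k] A) :
    opConvUnit S hS (adjointAction σ) =
      opConvUnit S hS ((Algebra.lmul k A).comp σ) * (convUnit (rightMulHom σ))⁻¹ := by
  ext h
  apply unop_injective
  ext b
  simp [opConvUnit, convUnit, rightMulHom, (ℛ k h).convMul_apply,
    adjointAction_apply_of_comul_eq σ (ℛ k h).eq.symm, mul_assoc]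

end AdjointAction

/-- The linear equivalence `a ⊗ b ↦ (c ↦ a c b)` for an algebra `A` with `A ⊗ Aᵐᵒᵖ ≅ End A`. -/
def mulLeftRightEquiv {k A : Type*} [CommRing k] [Ring A] [Algebra k A]
    (hA : Function.Bijective (AlgHom.mulLeftRight k A)) : A ⊗[k] A ≃ₗ[k] Module.End k A :=
  (opLinearEquiv k).lTensor A ≪≫ₗ (AlgEquiv.ofBijective _ hA).toLinearEquiv

/-- The product `b ∗ c = c₀ (c₁ · b)` of the `H`-opposite algebra of `A`. -/
def oppositeMul {k A H : Type*} [CommRing k] [Ring A] [Algebra k A] [AddCommGroup H] [Module k H]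
    (act : H →ₗ[k] A →ₗ[k] A) (coact : A →ₗ[k] A ⊗[k] H) (b c : A) : A :=
  TensorProduct.lift ((LinearMap.mul k A).compl₂ (act.flip b)) (coact c)

namespace IsCorepresentation

variable {k A H : Type*} [CommRing k] [Ring A] [Algebra k A] [Ring H] [HopfAlgebra k H]
  {ρ : A ⊗[k] H} (hρ : IsCorepresentation ρ)

section Units

variable {B : Type*} [Ring B] [Algebra k B] (f : H →ₐ[k] B)

/-- The unit `Σ X ⊗ f(x)` of `A ⊗ B` attached to a corepresentation `ρ = Σ X ⊗ x` and an algebra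
homomorphism `f : H → B`. -/
def unit : (A ⊗[k] B)ˣ :=
  Units.map hρ.eval (convUnit f)

variable (S : H ≃ₗ[k] H) (hS : ∀ h, S h = antipode k h)

/-- The unit `Σ X ⊗ f(x)` of `A ⊗ Bᵐᵒᵖ` attached to a corepresentation `ρ = Σ X ⊗ x` and an
algebra homomorphism `f : H → B`; it exists because the antipode of `H` is bijective. -/
def opUnit : (A ⊗[k] Bᵐᵒᵖ)ˣ :=
  Units.map hρ.eval (opConvUnit S hS f)

variable {ι : Type*} {s : Finset ι} {X : ι → A} {x : ι → H} (hsum : ρ = ∑ i ∈ s, X i ⊗ₜ[k] x i)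
include hsum

theorem val_inv_unit :
    (↑(hρ.unit f)⁻¹ : A ⊗[k] B) = ∑ i ∈ s, X i ⊗ₜ f (antipode k (x i)) := by
  subst hsum
  simp [unit, convUnit, eval]

theorem val_opUnit : (hρ.opUnit f S hS : A ⊗[k] Bᵐᵒᵖ) = ∑ i ∈ s, X i ⊗ₜ op (f (x i)) := by
  subst hsum
  simp [opUnit, opConvUnit, eval]

theorem val_inv_opUnit :
    (↑(hρ.opUnit f S hS)⁻¹ : A ⊗[k] Bᵐᵒᵖ) = ∑ i ∈ s, X i ⊗ₜ op (f (S.symm (x i))) := by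
  subst hsum
  simp [opUnit, opConvUnit, eval]

end Units

section AdjointStructure

variable (S : H ≃ₗ[k] H) (hS : ∀ h, S h = antipode k h)
  {ι : Type*} {s : Finset ι} {X : ι → A} {x : ι → H}
variable (σ : H →ₐ[k] A)

/-- The linear automorphism `b ↦ Σ X b σ(x)` of `A` attached to a corepresentation
`ρ = Σ X ⊗ x`. -/
def sandwich : A ≃ₗ[k] A :=
  LinearMap.GeneralLinearGroup.toLinearEquiv
    (Units.map (AlgHom.mulLeftRight k A) (hρ.opUnit σ S hS))

/-- The preimage of `1` under `b ↦ Σ X b σ(x)`, which is `Σ X σ(S⁻¹ x)`. For the corepresentation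
given by a universal R-matrix, it is the Drinfeld element. -/
def drinfeldElement : A :=
  (hρ.sandwich S hS σ).symm 1

/-- The coaction on `A` attached to a corepresentation `ρ`, namely `c ↦ ρ (c ⊗ 1) ρ⁻¹` computed
in `A ⊗ Hᵐᵒᵖ`. -/
def adjointCoaction : A →ₗ[k] A ⊗[k] H :=
  (opLinearEquiv k).symm.toLinearMap.lTensor A ∘ₗ
    LinearMap.mulRight k ↑(hρ.opUnit (.id k H) S hS)⁻¹ ∘ₗ
      LinearMap.mulLeft k ↑(hρ.opUnit (.id k H) S hS) ∘ₗ (TensorProduct.mk k A Hᵐᵒᵖ).flip 1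

variable (hsum : ρ = ∑ i ∈ s, X i ⊗ₜ[k] x i)
include hsum

theorem sandwich_apply (b : A) :
    hρ.sandwich S hS σ b = ∑ i ∈ s, X i * b * σ (x i) := by
  simp [sandwich, val_opUnit hρ _ S hS hsum]

theorem drinfeldElement_eq_sum :
    hρ.drinfeldElement S hS σ = ∑ i ∈ s, X i * σ (S.symm (x i)) := by
  have h : hρ.drinfeldElement S hS σ = AlgHom.mulLeftRight k A ↑(hρ.opUnit σ S hS)⁻¹ 1 := rfl
  rw [h, val_inv_opUnit hρ _ S hS hsum]
  simp

theorem adjointCoaction_apply (c : A) :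
    hρ.adjointCoaction S hS c = ∑ i ∈ s, ∑ j ∈ s, (X i * c * X j) ⊗ₜ (S.symm (x j) * x i) := by
  simp [adjointCoaction, val_opUnit hρ _ S hS hsum, val_inv_opUnit hρ _ S hS hsum,
    Finset.sum_mul, Finset.mul_sum]

include hρ in
theorem sum_tmul_adjointAction (a b : A) :
    ∑ i ∈ s, (a * X i) ⊗ₜ[k] adjointAction σ (x i) b =
      ∑ i ∈ s, ∑ j ∈ s, (a * X i * X j) ⊗ₜ[k] (σ (x i) * b * σ (antipode k (x j))) := by
  have h := congrArg (TensorProduct.map (LinearMap.mulLeft k a) (LinearMap.applyₗ b))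
    (congrArg hρ.eval (adjointAction_eq_conv σ))
  rw [map_mul] at h
  subst hsum
  simpa [eval, Finset.sum_mul_sum, mul_assoc] using h

theorem sum_mul_adjointAction_antipodeInv (b : A) :
    ∑ i ∈ s, X i * adjointAction σ (S.symm (x i)) b =
      hρ.sandwich S hS σ (hρ.drinfeldElement S hS σ * b) := by
  have key : hρ.eval (opConvUnit S hS (adjointAction σ)).inv =
      hρ.eval (convUnit (rightMulHom σ)).val *
        hρ.eval (opConvUnit S hS ((Algebra.lmul k A).comp σ)).inv := by
    rw [← map_mul, opConvUnit_adjointAction]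
    simp
  simp only [sandwich_apply hρ S hS σ hsum, drinfeldElement_eq_sum hρ S hS σ hsum,
    Finset.sum_mul, Finset.mul_sum]
  rw [Finset.sum_comm]
  subst hsum
  have h := congrArg (TensorProduct.lift ((LinearMap.mul k A).compl₂
    (LinearMap.applyₗ b ∘ₗ (opLinearEquiv k).symm.toLinearMap))) key
  simpa [eval, opConvUnit, convUnit, rightMulHom, Finset.sum_mul, Finset.mul_sum, mul_assoc] using h

end AdjointStructure

section Bijectivity

variable (S : H ≃ₗ[k] H) (hS : ∀ h, S h = antipode k h) (σ : H →ₐ[k] A)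

/-- The linear automorphism `a ⊗ b ↦ Σ a X ⊗ σ(x) b` of `A ⊗ A` attached to a corepresentation
`ρ = Σ X ⊗ x`. -/
def twistEquiv : A ⊗[k] A ≃ₗ[k] A ⊗[k] A :=
  (opLinearEquiv k).lTensor A ≪≫ₗ
    Units.mulRightLinearEquiv k (hρ.opUnit σ S hS) ≪≫ₗ ((opLinearEquiv k).lTensor A).symm

theorem twistEquiv_tmul {ι : Type*} {s : Finset ι} {X : ι → A} {x : ι → H}
    (hsum : ρ = ∑ i ∈ s, X i ⊗ₜ[k] x i) (a b : A) :
    hρ.twistEquiv S hS σ (a ⊗ₜ b) = ∑ i ∈ s, (a * X i) ⊗ₜ[k] (σ (x i) * b) := by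
  simp [twistEquiv, val_opUnit hρ _ S hS hsum, Finset.mul_sum]

variable (hA : Function.Bijective (AlgHom.mulLeftRight k A)) {u : Aˣ}

theorem oppositeMul_adjointCoaction {ι : Type*} {s : Finset ι} {X : ι → A} {x : ι → H}
    (hsum : ρ = ∑ i ∈ s, X i ⊗ₜ[k] x i) (b c : A) :
    oppositeMul (adjointAction σ).toLinearMap (hρ.adjointCoaction S hS) b c =
      ∑ i ∈ s, X i * c * hρ.sandwich S hS σ
        (hρ.drinfeldElement S hS σ * adjointAction σ (x i) b) := by
  simp [oppositeMul, adjointCoaction_apply hρ S hS hsum,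
    ← sum_mul_adjointAction_antipodeInv hρ S hS σ hsum, Finset.mul_sum, mul_assoc]

include hA in
theorem bijective_of_eq_mul_oppositeMul (hu : (u : A) = hρ.drinfeldElement S hS σ)
    (F : A ⊗[k] A →ₗ[k] Module.End k A)
    (hF : ∀ a b c, F (a ⊗ₜ b) c =
      a * oppositeMul (adjointAction σ).toLinearMap (hρ.adjointCoaction S hS) b c) :
    Function.Bijective F := by
  let E : A ⊗[k] A ≃ₗ[k] Module.End k A :=
    hρ.twistEquiv S hS σ ≪≫ₗ Units.mulRightLinearEquiv k (hρ.unit σ)⁻¹ ≪≫ₗ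
      (Units.mulLeftLinearEquiv k A u ≪≫ₗ hρ.sandwich S hS σ).lTensor A ≪≫ₗ mulLeftRightEquiv hA
  suffices F = E.toLinearMap from this ▸ E.bijective
  obtain ⟨s, hs⟩ := TensorProduct.exists_finset ρ
  ext a b c
  let Λ : A ⊗[k] A →ₗ[k] A := TensorProduct.lift
    (((LinearMap.mul k A) ∘ₗ LinearMap.mulRight k c).compl₂
      (hρ.sandwich S hS σ ∘ₗ LinearMap.mulLeft k (u : A)))
  calc F (a ⊗ₜ b) c = Λ (∑ i ∈ s, (a * i.1) ⊗ₜ adjointAction σ i.2 b) := by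
        simp [Λ, hF, oppositeMul_adjointCoaction hρ S hS σ hs, hu, Finset.mul_sum,
          mul_assoc]
    _ = E (a ⊗ₜ b) c := by
        rw [sum_tmul_adjointAction hρ σ hs]
        simp [Λ, E, mulLeftRightEquiv, twistEquiv_tmul hρ S hS σ hs, val_inv_unit hρ _ hs,
          Finset.mul_sum, mul_assoc]

include hA in
theorem bijective_of_eq_oppositeMul_mul (hu : (u : A) = hρ.drinfeldElement S hS σ)
    (G : A ⊗[k] A →ₗ[k] (Module.End k A)ᵐᵒᵖ)
    (hG : ∀ a b c, (G (a ⊗ₜ b)).unop c =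
      oppositeMul (adjointAction σ).toLinearMap (hρ.adjointCoaction S hS) c a * b) :
    Function.Bijective G := by
  let E : A ⊗[k] A ≃ₗ[k] (Module.End k A)ᵐᵒᵖ :=
    hρ.twistEquiv S hS σ ≪≫ₗ (Units.mulRightLinearEquiv k u).rTensor A ≪≫ₗ
      Units.mulLeftLinearEquiv k _ (hρ.unit σ)⁻¹ ≪≫ₗ
      (hρ.sandwich S hS σ).rTensor A ≪≫ₗ mulLeftRightEquiv hA ≪≫ₗ opLinearEquiv k
  suffices G = E.toLinearMap from this ▸ E.bijective
  obtain ⟨s, hs⟩ := TensorProduct.exists_finset ρ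
  ext a b
  apply unop_injective
  ext c
  let Λ : A ⊗[k] A →ₗ[k] A := TensorProduct.lift
    (((LinearMap.mul k A) ∘ₗ LinearMap.mulRight k a).compl₂
      (LinearMap.mulRight k b ∘ₗ hρ.sandwich S hS σ ∘ₗ LinearMap.mulLeft k (u : A)))
  calc (G (a ⊗ₜ b)).unop c = Λ (∑ i ∈ s, (1 * i.1) ⊗ₜ adjointAction σ i.2 c) := by
        simp [Λ, hG, oppositeMul_adjointCoaction hρ S hS σ hs, hu, Finset.sum_mul,
          mul_assoc]
    _ = ∑ i ∈ s, ∑ j ∈ s, ∑ l ∈ s,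
          i.1 * j.1 * a * l.1 * u * σ i.2 * c * σ (antipode k j.2) * σ l.2 * b := by
        rw [sum_tmul_adjointAction hρ σ hs]
        simp [Λ, sandwich_apply hρ S hS σ hs, mul_assoc]
    _ = ∑ l ∈ s, ∑ j ∈ s, ∑ i ∈ s,
          i.1 * j.1 * a * l.1 * u * σ i.2 * c * σ (antipode k j.2) * σ l.2 * b := by
        exact Finset.sum_comm_cycle.trans (Finset.sum_congr rfl fun _ _ => Finset.sum_comm)
    _ = (E (a ⊗ₜ b)).unop c := by
        simp [E, mulLeftRightEquiv, twistEquiv_tmul hρ S hS σ hs, val_inv_unit hρ _ hs,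
          sandwich_apply hρ S hS σ hs, Finset.sum_mul, mul_assoc, -map_inv]
end Bijectivity

end IsCorepresentation

/-- The Yetter-Drinfeld compatibility `(h·m)₀ ⊗ (h·m)₁ = h₂·m₀ ⊗ β(h₃) m₁ α(S⁻¹ h₁)`, written as
an identity in `A ⊗ H` between the action `π : H → A` and the corepresentation `ρ`. -/
def IsYDCompatible {k A H : Type*} [CommRing k] [Ring A] [Algebra k A] [Ring H] [Bialgebra k H]
    (S : H ≃ₗ[k] H) (π : H →ₐ[k] A) (α : H ≃ₐ[k] H) (β : H →ₗ[k] H) (ρ : A ⊗[k] H) : Prop :=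
  ∀ h, ρ * (π h ⊗ₜ 1) = ∑ i ∈ (ℛ k h).index,
    TensorProduct.map π.toLinearMap β (comul ((ℛ k h).right i)) * ρ *
      (1 ⊗ₜ α (S.symm ((ℛ k h).left i)))

section Compatibility

variable {k A H : Type*} [CommRing k] [Ring A] [Algebra k A] [Ring H] [HopfAlgebra k H]
  {ρ : A ⊗[k] H} (hρ : IsCorepresentation ρ) {S : H ≃ₗ[k] H} (hS : ∀ h, S h = antipode k h)
  {π : H →ₐ[k] A} {α : H ≃ₐ[k] H} {β : H →ₗ[k] H}

include hS

theorem IsYDCompatible.map_comul_mul (hYD : IsYDCompatible S π α β ρ) (h : H) :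
    TensorProduct.map π.toLinearMap β (comul h) * ρ =
      ∑ i ∈ (ℛ k h).index, ρ * (π ((ℛ k h).right i) ⊗ₜ α ((ℛ k h).left i)) := by
  -- The factors `α(S⁻¹ h₁)` form the convolution inverse of a unit with values in `(A ⊗ H)ᵐᵒᵖ`.
  let Q := opConvUnit S hS
    ((Algebra.TensorProduct.includeRight : H →ₐ[k] A ⊗[k] H).comp (α : H →ₐ[k] H))
  let N : WithConv (H →ₗ[k] (A ⊗[k] H)ᵐᵒᵖ) := toConv ((opLinearEquiv k).toLinearMap ∘ₗ
    LinearMap.mulLeft k ρ ∘ₗ (TensorProduct.mk k A H).flip 1 ∘ₗ π.toLinearMap)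
  let K : WithConv (H →ₗ[k] (A ⊗[k] H)ᵐᵒᵖ) := toConv ((opLinearEquiv k).toLinearMap ∘ₗ
    LinearMap.mulRight k ρ ∘ₗ TensorProduct.map π.toLinearMap β ∘ₗ comul)
  have hN : N = ↑Q⁻¹ * K := by
    ext h
    apply unop_injective
    simpa [N, Q, K, (ℛ k h).convMul_apply, opConvUnit] using hYD h
  have hK : K = Q * N := by rw [hN, Units.mul_inv_cancel_left]
  simpa [N, Q, K, (ℛ k h).convMul_apply, opConvUnit, mul_assoc] using congr(unop (ofConv $hK h))

theorem antipodeInv_comm (hα : ∀ h, α (antipode k h) = antipode k (α h)) (h : H) :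
    α (S.symm h) = S.symm (α h) := by
  rw [LinearEquiv.eq_symm_apply, hS, ← hα, ← hS, S.apply_symm_apply]

theorem sum_mul_drinfeldElement_mul (hα : ∀ h, α (antipode k h) = antipode k (α h))
    (hYD : IsYDCompatible S π α β ρ) (h : H) :
    ∑ i ∈ (ℛ k h).index, π ((ℛ k h).left i) *
      (hρ.drinfeldElement S hS (π.comp α.symm) * π (α.symm (S.symm (β ((ℛ k h).right i))))) =
      counit (R := k) h • hρ.drinfeldElement S hS (π.comp α.symm) := by
  obtain ⟨s, hs⟩ := TensorProduct.exists_finset ρ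
  let D : A ⊗[k] H →ₗ[k] A := TensorProduct.lift ((LinearMap.mul k A).compl₂
    (π.toLinearMap ∘ₗ α.symm.toLinearMap ∘ₗ S.symm.toLinearMap))
  have h₁ (g g' : H) : D ((π g ⊗ₜ β g') * ρ) =
      π g * (hρ.drinfeldElement S hS (π.comp α.symm) * π (α.symm (S.symm (β g')))) := by
    rw [IsCorepresentation.drinfeldElement_eq_sum hρ S hS _ hs, hs]
    simp [D, Finset.mul_sum, Finset.sum_mul, antipodeInv_mul S hS, mul_assoc]
  have h₂ (g g' : H) : D (ρ * (π g' ⊗ₜ α g)) =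
      ∑ i ∈ s, i.1 * π (g' * S.symm g) * π (α.symm (S.symm i.2)) := by
    simp [D, hs, Finset.sum_mul, antipodeInv_mul S hS, mul_assoc, ← antipodeInv_comm hS hα]
  have key := congrArg D (hYD.map_comul_mul hS h)
  rw [← (ℛ k h).eq] at key
  simp only [map_sum, Finset.sum_mul, TensorProduct.map_tmul, h₂] at key
  simp only [← h₁]
  refine key.trans ?_
  rw [Finset.sum_comm]
  simp only [← Finset.sum_mul, ← Finset.mul_sum, ← map_sum, sum_mul_antipodeInv S hS]
  rw [IsCorepresentation.drinfeldElement_eq_sum hρ S hS _ hs]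
  simp [Finset.smul_sum, Algebra.algebraMap_eq_smul_one]

theorem drinfeldElement_mul (hα : ∀ h, α (antipode k h) = antipode k (α h))
    (hYD : IsYDCompatible S π α β ρ) (h : H) :
    hρ.drinfeldElement S hS (π.comp α.symm) * π (α.symm (S.symm (β h))) =
      π (antipode k h) * hρ.drinfeldElement S hS (π.comp α.symm) := by
  set U := hρ.drinfeldElement S hS (π.comp α.symm)
  let f : WithConv (H →ₗ[k] A) := toConv (LinearMap.mulLeft k U ∘ₗ π.toLinearMap ∘ₗ
    α.symm.toLinearMap ∘ₗ S.symm.toLinearMap ∘ₗ β)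
  let e : WithConv (H →ₗ[k] A) := toConv ((counit (R := k)).smulRight U)
  have hf : (convUnit π : WithConv (H →ₗ[k] A)) * f = e := by
    ext h
    simpa [f, e, convUnit, (ℛ k h).convMul_apply] using sum_mul_drinfeldElement_mul hρ hS hα hYD h
  calc U * π (α.symm (S.symm (β h))) = (↑(convUnit π)⁻¹ * e) h := by
        rw [← hf, Units.inv_mul_cancel_left]; rfl
    _ = π (antipode k (∑ i ∈ (ℛ k h).index,
          counit (R := k) ((ℛ k h).right i) • (ℛ k h).left i)) * U := by
        simp [e, convUnit, (ℛ k h).convMul_apply, Finset.sum_mul]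
    _ = π (antipode k h) * U := by
        have := congrArg (TensorProduct.rid k H) (sum_tmul_counit_eq (R := k) (ℛ k h))
        simp only [map_sum, TensorProduct.rid_tmul, one_smul] at this
        rw [this]

theorem isUnit_drinfeldElement [IsDedekindFiniteMonoid A] (hβ : Function.Surjective β)
    (hα : ∀ h, α (antipode k h) = antipode k (α h))
    (hYD : IsYDCompatible S π α β ρ) :
    IsUnit (hρ.drinfeldElement S hS (π.comp α.symm)) := by
  set U := hρ.drinfeldElement S hS (π.comp α.symm)
  choose γ hγ using hβ
  obtain ⟨s, hs⟩ := TensorProduct.exists_finset ρ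
  suffices (∑ i ∈ s, i.1 * π (antipode k (γ (S i.2)))) * U = 1 from
    IsUnit.of_mul_eq_one_right _ this
  calc _ = hρ.sandwich S hS (π.comp α.symm) U := by
        simp only [Finset.sum_mul, IsCorepresentation.sandwich_apply hρ S hS _ hs]
        refine Finset.sum_congr rfl fun i _ => ?_
        rw [mul_assoc, ← drinfeldElement_mul hρ hS hα hYD, hγ, S.symm_apply_apply, ← mul_assoc]
        rfl
    _ = 1 := LinearEquiv.apply_symm_apply _ _

end Compatibility

section Representatives

variable {k M N P Q : Type*} [CommRing k] [AddCommGroup M] [Module k M] [AddCommGroup N]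
  [Module k N] [AddCommGroup P] [Module k P] [AddCommGroup Q] [Module k Q]

theorem exists_nat_sum_tmul (z : M ⊗[k] N) :
    ∃ (s : Finset ℕ) (p : ℕ → M) (q : ℕ → N), z = ∑ i ∈ s, p i ⊗ₜ[k] q i := by
  obtain ⟨n, p, q, rfl⟩ := TensorProduct.exists_sum_tmul_eq z
  refine ⟨Finset.range n, Function.extend Fin.val p 0, Function.extend Fin.val q 0, ?_⟩
  simp [Finset.sum_range, Fin.val_injective.extend_apply]

theorem exists_nat_sum_tmul_tmul (z : (M ⊗[k] N) ⊗[k] P) :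
    ∃ (s : Finset ℕ) (p : ℕ → M) (q : ℕ → N) (r : ℕ → P),
      z = ∑ i ∈ s, (p i ⊗ₜ[k] q i) ⊗ₜ[k] r i := by
  obtain ⟨n, w, r, rfl⟩ := TensorProduct.exists_sum_tmul_eq z
  choose m p q hw using fun i => TensorProduct.exists_sum_tmul_eq (w i)
  obtain ⟨e, he⟩ := exists_injective_nat ((i : Fin n) × Fin (m i))
  refine ⟨Finset.univ.map ⟨e, he⟩, Function.extend e (fun i => p i.1 i.2) 0,
    Function.extend e (fun i => q i.1 i.2) 0, Function.extend e (fun i => r i.1) 0, ?_⟩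
  simp [he.extend_apply, Fintype.sum_sigma, hw, TensorProduct.sum_tmul]

theorem eq_map_lift_of_forall_nat_sum_tmul {z : M ⊗[k] N} {y : Q} (L : M →ₗ[k] N →ₗ[k] P)
    (g : P →ₗ[k] Q)
    (h : ∀ (s : Finset ℕ) (p : ℕ → M) (q : ℕ → N), z = ∑ i ∈ s, p i ⊗ₜ[k] q i →
      y = ∑ i ∈ s, g (L (p i) (q i))) :
    y = g (TensorProduct.lift L z) := by
  obtain ⟨s, p, q, rfl⟩ := exists_nat_sum_tmul z
  simpa using h s p q rfl

end Representatives

section CoactionElement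

variable {k M H : Type*} [CommRing k] [AddCommGroup M] [Module k M] [Module.Projective k M]
  [Module.Finite k M] [AddCommGroup H] [Module k H]

theorem rTensorHomEquivHomRTensor_apply_apply (z : Module.End k M ⊗[k] H) (m : M) :
    rTensorHomEquivHomRTensor k M M H z m = (LinearMap.applyₗ (R := k) m).rTensor H z := by
  rw [rTensorHomEquivHomRTensor_apply]
  induction z with
  | zero => simp
  | tmul f x => simp
  | add z w hz hw => simp [hz, hw]

theorem end_tensor_ext {z w : Module.End k M ⊗[k] H}
    (h : ∀ m, (LinearMap.applyₗ (R := k) m).rTensor H z =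
      (LinearMap.applyₗ (R := k) m).rTensor H w) : z = w := by
  apply (rTensorHomEquivHomRTensor k M M H).injective
  ext m : 1
  rw [rTensorHomEquivHomRTensor_apply_apply, h, rTensorHomEquivHomRTensor_apply_apply]

/-- The element `Σ X ⊗ x` of `End M ⊗ H` corresponding to a map `m ↦ Σ X m ⊗ x` from `M` to
`M ⊗ H`. -/
def coactionElement (coact : M →ₗ[k] M ⊗[k] H) : Module.End k M ⊗[k] H :=
  (rTensorHomEquivHomRTensor k M M H).symm coact

theorem coact_apply_of_coactionElement_eq {coact : M →ₗ[k] M ⊗[k] H} {ι : Type*} {s : Finset ι}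
    {X : ι → Module.End k M} {x : ι → H}
    (h : coactionElement coact = ∑ i ∈ s, X i ⊗ₜ[k] x i) (m : M) :
    coact m = ∑ i ∈ s, X i m ⊗ₜ[k] x i := by
  rw [coactionElement, LinearEquiv.symm_apply_eq] at h
  rw [h, rTensorHomEquivHomRTensor_apply_apply]
  simp

end CoactionElement

theorem isCorepresentation_coactionElement {k M H : Type*} [CommRing k] [AddCommGroup M]
    [Module k M] [Module.Projective k M] [Module.Finite k M] [Ring H] [Bialgebra k H]
    {coact : M →ₗ[k] M ⊗[k] H}
    (hcoassoc : ∀ m, coact.rTensor H (coact m) =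
      (TensorProduct.assoc k M H H).symm ((comul (R := k)).lTensor M (coact m)))
    (hcounit : ∀ m, TensorProduct.rid k M ((counit (R := k)).lTensor M (coact m)) = m) :
    IsCorepresentation (coactionElement coact) := by
  obtain ⟨s, hs⟩ := TensorProduct.exists_finset (coactionElement coact)
  have hcoact := coact_apply_of_coactionElement_eq hs
  rw [hs]
  constructor
  · refine end_tensor_ext fun m => ?_
    have h := congrArg (TensorProduct.assoc k M H H) (hcoassoc m)
    rw [LinearEquiv.apply_symm_apply] at h
    simp only [hcoact, map_sum, LinearMap.rTensor_tmul, LinearMap.lTensor_tmul,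
      TensorProduct.sum_tmul, TensorProduct.assoc_tmul] at h
    rw [Finset.sum_comm] at h
    simpa [Finset.sum_mul_sum] using h.symm
  · apply (TensorProduct.rid k _).injective
    ext m
    simpa [hcoact, Algebra.TensorProduct.one_def] using hcounit m

theorem bijective_mulLeftRight_end (k M : Type*) [Field k] [AddCommGroup M] [Module k M]
    [FiniteDimensional k M] :
    Function.Bijective (AlgHom.mulLeftRight k (Module.End k M)) := by
  rcases subsingleton_or_nontrivial M with hM | hM
  · have : Subsingleton (Module.End k M ⊗[k] (Module.End k M)ᵐᵒᵖ) :=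
      Module.subsingleton (Module.End k M) _
    exact ⟨Function.injective_of_subsingleton _, Function.surjective_to_subsingleton _⟩
  · have : Nonempty (Fin (Module.finrank k M)) := ⟨⟨0, Module.finrank_pos⟩⟩
    have := IsAzumaya.matrix k (Fin (Module.finrank k M))
    exact (IsAzumaya.of_AlgEquiv k _ _
      (LinearMap.toMatrixAlgEquiv (Module.finBasis k M)).symm).bij

section EndomorphismAlgebra

variable {k H M : Type} [Field k] [Ring H] [HopfAlgebra k H] [AddCommGroup M] [Module k M]
  {S : H ≃ₗ[k] H} {α : H ≃ₐ[k] H} {β : H →ₗ[k] H}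
  {act : H →ₗ[k] M →ₗ[k] M} {coact : M →ₗ[k] M ⊗[k] H}
  (hM : GYD.IsYD k H S.symm α β act coact)

/-- The algebra homomorphism `H → End M` given by the action on a Yetter-Drinfeld module. -/
def actionHom : H →ₐ[k] Module.End k M :=
  AlgHom.ofLinearMap act (LinearMap.ext hM.1) fun g h => LinearMap.ext (hM.2.1 g h)

theorem eq_adjointAction {actE : H →ₗ[k] Module.End k M →ₗ[k] Module.End k M}
    (hactE : GYD.EndActChar k H α.symm act actE) :
    actE = (adjointAction ((actionHom hM).comp α.symm)).toLinearMap := by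
  ext h u m
  obtain ⟨s, p, q, hpq⟩ := exists_nat_sum_tmul (comul (R := k) h)
  rw [hactE h u m s p q hpq]
  simp [adjointAction_apply_of_comul_eq _ hpq, actionHom]

variable [FiniteDimensional k M]

include hM in
theorem isCorepresentation_coactionElement_of_isYD :
    IsCorepresentation (coactionElement coact) :=
  isCorepresentation_coactionElement hM.2.2.1 hM.2.2.2.1

theorem isYDCompatible_coactionElement :
    IsYDCompatible S (actionHom hM) α β (coactionElement coact) := by
  intro h
  set ρ := coactionElement coact
  let Φ : H →ₗ[k] H ⊗[k] H →ₗ[k] Module.End k M ⊗[k] H :=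
    ((LinearMap.mul k _).flip ∘ₗ TensorProduct.mk k _ H 1 ∘ₗ α.toLinearMap ∘ₗ
      S.symm.toLinearMap).compl₂
        (LinearMap.mulRight k ρ ∘ₗ TensorProduct.map (actionHom hM).toLinearMap β)
  obtain ⟨t, X, x, hρ⟩ := exists_nat_sum_tmul ρ
  obtain ⟨s, a, b, c, habc⟩ :=
    exists_nat_sum_tmul_tmul ((comul (R := k)).rTensor H (comul (R := k) h))
  have hcoact := coact_apply_of_coactionElement_eq hρ
  trans TensorProduct.lift Φ ((comul (R := k)).lTensor H (comul (R := k) h))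
  · rw [← coassoc_apply, habc]
    refine end_tensor_ext fun m => ?_
    have hYD := hM.2.2.2.2 h m s t a b c _ _ habc (hcoact m)
    rw [hcoact] at hYD
    simpa [Φ, hρ, Finset.sum_mul, Finset.mul_sum, actionHom] using hYD
  · rw [← (ℛ k h).eq]
    simp [Φ]

theorem eq_adjointCoaction (hS : ∀ h, S h = antipode k h)
    {coactE : Module.End k M →ₗ[k] Module.End k M ⊗[k] H}
    (hcoactE : GYD.EndCoactChar k H S.symm coact coactE) :
    coactE = (isCorepresentation_coactionElement_of_isYD hM).adjointCoaction S hS := by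
  ext u : 1
  obtain ⟨s, X, x, hρ⟩ := exists_nat_sum_tmul (coactionElement coact)
  have hcoact := coact_apply_of_coactionElement_eq hρ
  refine end_tensor_ext fun m => ?_
  rw [hcoactE u m s _ _ _ _ _ (hcoact m) fun j _ => hcoact _,
    IsCorepresentation.adjointCoaction_apply _ S hS hρ, Finset.sum_comm]
  simp

end EndomorphismAlgebra

theorem exists_linearEquiv_antipode {k H : Type} [Field k] [Ring H] [HopfAlgebra k H]
    {Sinv : H → H} (hS : GYD.IsAntipodeInv k H Sinv) :
    ∃ S : H ≃ₗ[k] H, (∀ h, S h = antipode k h) ∧ ⇑S.symm = Sinv :=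
  ⟨{ antipode k with invFun := Sinv, left_inv := hS.2, right_inv := hS.1 }, fun _ => rfl, rfl⟩

theorem map_antipode_of_isHopfAut {k H : Type} [Field k] [Ring H] [HopfAlgebra k H]
    {φ : H ≃ₗ[k] H} (hφ : GYD.IsHopfAut k H φ) (h : H) :
    φ (antipode k h) = antipode k (φ h) :=
  map_antipode (BialgHom.ofAlgHom (AlgEquiv.ofLinearEquiv φ hφ.2.1 hφ.1 : H →ₐ[k] H)
    (AlgHom.toLinearMap_injective <| LinearMap.ext hφ.2.2.2)
    (AlgHom.toLinearMap_injective <| LinearMap.ext fun h => (hφ.2.2.1 h).symm)) h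

end YetterDrinfeld

open YetterDrinfeld in
theorem statement_19_general
    (k H : Type) [Field k] [Ring H] [HopfAlgebra k H]
    (Sinv : H → H) (hS : GYD.IsAntipodeInv k H Sinv)
    (α : H ≃ₐ[k] H) (hα : ∀ h, α (HopfAlgebra.antipode k h) = HopfAlgebra.antipode k (α h))
    (β : H →ₗ[k] H) (hβ : Function.Surjective β)
    (M : Type) [AddCommGroup M] [Module k M] [FiniteDimensional k M]
    (actM : H →ₗ[k] M →ₗ[k] M) (coactM : M →ₗ[k] M ⊗[k] H)
    (hM : GYD.IsYD k H Sinv ⇑α ⇑β actM coactM)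
    (actE : H →ₗ[k] Module.End k M →ₗ[k] Module.End k M)
    (coactE : Module.End k M →ₗ[k] Module.End k M ⊗[k] H)
    (hactE : GYD.EndActChar k H ⇑α.symm actM actE)
    (hcoactE : GYD.EndCoactChar k H Sinv coactM coactE)
    (FF : Module.End k M ⊗[k] Module.End k M →ₗ[k] Module.End k (Module.End k M))
    (hFF : ∀ (a b c : Module.End k M) (t : Finset ℕ)
        (c₀ : ℕ → Module.End k M) (c₁ : ℕ → H),
        coactE c = ∑ j ∈ t, c₀ j ⊗ₜ[k] c₁ j →
        FF (a ⊗ₜ[k] b) c = ∑ j ∈ t, a * c₀ j * actE (c₁ j) b)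
    (GG : Module.End k M ⊗[k] Module.End k M →ₗ[k] (Module.End k (Module.End k M))ᵐᵒᵖ)
    (hGG : ∀ (a b c : Module.End k M) (t : Finset ℕ)
        (a₀ : ℕ → Module.End k M) (a₁ : ℕ → H),
        coactE a = ∑ j ∈ t, a₀ j ⊗ₜ[k] a₁ j →
        (GG (a ⊗ₜ[k] b)).unop c = ∑ j ∈ t, a₀ j * actE (a₁ j) c * b) :
    Function.Bijective FF ∧ Function.Bijective GG := by
  obtain ⟨S, hSant, rfl⟩ := exists_linearEquiv_antipode hS
  have hρ := isCorepresentation_coactionElement_of_isYD hM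
  obtain ⟨u, hu⟩ := isUnit_drinfeldElement hρ hSant hβ hα (isYDCompatible_coactionElement hM)
  have hA := bijective_mulLeftRight_end k M
  have hact := eq_adjointAction hM hactE
  have hcoact := eq_adjointCoaction hM hSant hcoactE
  constructor
  · refine hρ.bijective_of_eq_mul_oppositeMul S hSant _ hA hu FF fun a b c => ?_
    rw [← hact, ← hcoact]
    exact eq_map_lift_of_forall_nat_sum_tmul _ (LinearMap.mulLeft k a) fun t c₀ c₁ hc => by
      simpa [mul_assoc] using hFF a b c t c₀ c₁ hc
  · refine hρ.bijective_of_eq_oppositeMul_mul S hSant _ hA hu GG fun a b c => ?_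
    rw [← hact, ← hcoact]
    exact eq_map_lift_of_forall_nat_sum_tmul _ (LinearMap.mulRight k b) (hGG a b c)

theorem statement_19
    (k H : Type) [Field k] [Ring H] [HopfAlgebra k H]
    (Sinv : H → H) (hS : GYD.IsAntipodeInv k H Sinv)
    (α β : H ≃ₗ[k] H)
    (hα : GYD.IsHopfAut k H α) (hβ : GYD.IsHopfAut k H β)
    (M : Type) [AddCommGroup M] [Module k M] [FiniteDimensional k M]
    (actM : H →ₗ[k] M →ₗ[k] M) (coactM : M →ₗ[k] M ⊗[k] H)
    (hM : GYD.IsYD k H Sinv ⇑α ⇑β actM coactM)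
    -- A = End(M) with its Yetter-Drinfeld algebra structure
    (actE : H →ₗ[k] Module.End k M →ₗ[k] Module.End k M)
    (coactE : Module.End k M →ₗ[k] Module.End k M ⊗[k] H)
    (hactE : GYD.EndActChar k H ⇑α.symm actM actE)
    (hcoactE : GYD.EndCoactChar k H Sinv coactM coactE)
    -- the map F : A # A-bar → End(A), F(a # b)(c) = a c₍₀₎ (c₍₁₎ · b)
    (FF : Module.End k M ⊗[k] Module.End k M →ₗ[k] Module.End k (Module.End k M))
    (hFF : ∀ (a b c : Module.End k M) (t : Finset ℕ)
        (c₀ : ℕ → Module.End k M) (c₁ : ℕ → H),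
        coactE c = ∑ j ∈ t, c₀ j ⊗ₜ[k] c₁ j →
        FF (a ⊗ₜ[k] b) c = ∑ j ∈ t, a * c₀ j * actE (c₁ j) b)
    -- the map G : A-bar # A → End(A)^op, G(a # b)(c) = a₍₀₎ (a₍₁₎ · c) b
    (GG : Module.End k M ⊗[k] Module.End k M →ₗ[k] (Module.End k (Module.End k M))ᵐᵒᵖ)
    (hGG : ∀ (a b c : Module.End k M) (t : Finset ℕ)
        (a₀ : ℕ → Module.End k M) (a₁ : ℕ → H),
        coactE a = ∑ j ∈ t, a₀ j ⊗ₜ[k] a₁ j →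
        (GG (a ⊗ₜ[k] b)).unop c = ∑ j ∈ t, a₀ j * actE (a₁ j) c * b) :
    -- A is H-Azumaya
    Function.Bijective FF ∧ Function.Bijective GG := by
  exact statement_19_general k H Sinv hS (.ofLinearEquiv α hα.2.1 hα.1)
    (YetterDrinfeld.map_antipode_of_isHopfAut hα) β β.surjective M actM coactM hM actE coactE
    hactE hcoactE FF hFF GG hGG

end
end
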